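/- arXiv:1008.0287 — 3 statements merged into one kernel-verified Lean document; each statement's English description precedes it below -/
import Mathlib

section
/- Let φ ∈ Val(V) be a translation invariant continuous valuation, and let n = dim V. Then for any s ≥ 1 and any convex bodies A_1, …, A_s ∈ K(V), the function f(λ_1, …, λ_s) = φ(λ_1 A_1 + ⋯ + λ_s A_s), defined for λ_1, …, λ_s ≥ 0 (where + denotes Minkowski sum and λA dilation), agrees with a polynomial in λ_1, …, λ_s of total degree at most n (McMullen's theorem). -/
/-!
The theorem is reduced to one body and one parameter. For a fixed body `L`, the map `K ↦ φ (K + L)`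
is again a continuous translation invariant valuation (`memVal_add_right`), so if `t ↦ φ (t K)` is
always a polynomial of degree at most `n`, then `φ (∑ λᵢ Aᵢ)` is polynomial in each `λᵢ`
separately, and Lagrange interpolation variable by variable (`smul_interpolation`,
`exists_mvPolynomial`) makes it a polynomial in all of them. Restricting to the ray through
`λ` shows that the homogeneous components of degree greater than `n` vanish at every nonnegative
`λ`, so they can be discarded.

For one body, continuity and density of polytopes allow `K = conv {v₁, …, v_m}`. The linear
map `π` with `π eᵢ = vᵢ` carries the standard simplex to `K`, and `A ↦ φ (π A)` is still a valuation:
if `A ∪ B` is convex then `π (A ∩ B) = π A ∩ π B`, because a segment from `A` to `B` inside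
`A ∪ B` meets `A ∩ B` (`image_inter_of_convex_union`). For the dilated standard simplex, cutting
successively along the hyperplanes `xᵢ = 1` gives a difference equation in the integer dilation
factor `k` whose right-hand side involves slices with one more bounded coordinate. By induction
(`slice_poly`) the value is a polynomial in `k` once `k > m`. This threshold does not change when `K`
is replaced by `K / N`, so letting `N → ∞` and using continuity yields a polynomial in `t ≥ 0`
(`polytope_poly`).

The bound `n` on the degree comes from growth. By continuity at `{0}`, `φ` is bounded on all
bodies contained in a small box, and cutting `k K` along a grid of such boxes gives
`φ (k K) = O(kⁿ)` (`norm_le_of_box`, `exists_growth`).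
-/

open scoped NNReal Pointwise
open Metric MeasureTheory

/-- The singleton convex body `{x}`. -/
def ConvexBody.singletonBody {V : Type*} [NormedAddCommGroup V] [NormedSpace ℝ V] (x : V) :
    ConvexBody V :=
  ⟨{x}, convex_singleton x, isCompact_singleton, Set.singleton_nonempty x⟩

/-- `φ` satisfies the valuation property: `φ(A ∪ B) = φ(A) + φ(B) - φ(A ∩ B)` whenever
`A`, `B` and `A ∪ B` are convex bodies. -/
def IsValuation {V : Type*} [NormedAddCommGroup V] [NormedSpace ℝ V]
    (φ : ConvexBody V → ℂ) : Prop :=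
  ∀ A B C D : ConvexBody V, (C : Set V) = (A : Set V) ∪ (B : Set V) →
    (D : Set V) = (A : Set V) ∩ (B : Set V) → φ C = φ A + φ B - φ D

/-- `φ` is translation invariant. -/
def IsTranslationInvariant {V : Type*} [NormedAddCommGroup V] [NormedSpace ℝ V]
    (φ : ConvexBody V → ℂ) : Prop :=
  ∀ (K : ConvexBody V) (x : V), φ (K + ConvexBody.singletonBody x) = φ K

/-- `φ ∈ Val(V)`: a translation invariant valuation, continuous in the Hausdorff metric. -/
def MemVal {V : Type*} [NormedAddCommGroup V] [NormedSpace ℝ V]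
    (φ : ConvexBody V → ℂ) : Prop :=
  IsValuation φ ∧ IsTranslationInvariant φ ∧ Continuous φ

/-- `φ` is homogeneous of degree `i`: `φ (λ • K) = λ ^ i * φ K` for all `λ ≥ 0`. -/
def IsHomogeneousVal {V : Type*} [NormedAddCommGroup V] [NormedSpace ℝ V]
    (φ : ConvexBody V → ℂ) (i : ℕ) : Prop :=
  ∀ (c : ℝ≥0) (K : ConvexBody V), φ (c • K) = ((c : ℝ) : ℂ) ^ i * φ K

namespace McMullen

open Polynomial Filter Topology

/-- A translation invariant valuation on compact convex sets, encoded as a function on all sets.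
The empty set is admitted, with value `0`, so that cutting a body needs no case distinction. The
values on sets that are not compact and convex are unconstrained, except for translation
invariance. -/
structure IsSetVal {E : Type*} [NormedAddCommGroup E] [NormedSpace ℝ E]
    (ψ : Set E → ℂ) : Prop where
  empty : ψ ∅ = 0
  union : ∀ A B : Set E, IsCompact A → IsCompact B → Convex ℝ A → Convex ℝ B →
    Convex ℝ (A ∪ B) → ψ (A ∪ B) = ψ A + ψ B - ψ (A ∩ B)
  vadd : ∀ (x : E) (A : Set E), ψ (x +ᵥ A) = ψ A

/-! ### Valuations on sets -/

section Sets

variable {E F : Type*} [NormedAddCommGroup E] [NormedSpace ℝ E]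
  [NormedAddCommGroup F] [NormedSpace ℝ F]

/-- The segment is connected, so it cannot be covered by two closed sets, each meeting it,
without meeting their intersection. -/
theorem exists_mem_segment_inter {A B : Set E} (hA : IsClosed A) (hB : IsClosed B)
    (hAB : Convex ℝ (A ∪ B)) {a b : E} (ha : a ∈ A) (hb : b ∈ B) :
    ∃ z ∈ segment ℝ a b, z ∈ A ∩ B := by
  have hseg : IsPreconnected (segment ℝ a b) := (convex_segment a b).isPreconnected
  have hsub : segment ℝ a b ⊆ A ∪ B := hAB.segment_subset (Or.inl ha) (Or.inr hb)
  exact isPreconnected_closed_iff.1 hseg A B hA hB hsub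
    ⟨a, left_mem_segment ℝ a b, ha⟩ ⟨b, right_mem_segment ℝ a b, hb⟩

/-- Two points `a ∈ A`, `b ∈ B` with the same image `y` are joined by a segment that `π` collapses to
`y` and that meets `A ∩ B`. -/
theorem image_inter_of_convex_union (π : E →ₗ[ℝ] F) {A B : Set E} (hA : IsClosed A)
    (hB : IsClosed B) (hAB : Convex ℝ (A ∪ B)) : π '' (A ∩ B) = π '' A ∩ π '' B := by
  refine Set.Subset.antisymm (Set.image_inter_subset _ _ _) ?_
  rintro y ⟨⟨a, ha, rfl⟩, b, hb, hab⟩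
  obtain ⟨z, hz, hzAB⟩ := exists_mem_segment_inter hA hB hAB ha hb
  refine ⟨z, hzAB, ?_⟩
  obtain ⟨s, t, -, -, hst, rfl⟩ := hz
  rw [map_add, map_smul, map_smul, hab, ← add_smul, hst, one_smul]

theorem IsSetVal.comp_image {ψ : Set F → ℂ} (h : IsSetVal ψ) (π : E →L[ℝ] F) :
    IsSetVal (fun A : Set E => ψ (π '' A)) where
  empty := by simp [h.empty]
  union A B hA hB cA cB cAB := by
    have := image_inter_of_convex_union (π : E →ₗ[ℝ] F) hA.isClosed hB.isClosed cAB
    simp only [ContinuousLinearMap.coe_coe] at this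
    rw [this, Set.image_union]
    refine h.union _ _ (hA.image π.continuous) (hB.image π.continuous)
      (cA.linear_image (π : E →ₗ[ℝ] F)) (cB.linear_image (π : E →ₗ[ℝ] F)) ?_
    rw [← Set.image_union]
    exact cAB.linear_image (π : E →ₗ[ℝ] F)
  vadd x A := by
    have : π '' (x +ᵥ A) = π x +ᵥ π '' A := by
      simp only [← Set.image_vadd, Set.image_image, vadd_eq_add, map_add]
    rw [this, h.vadd]

open Classical in
/-- The extension of `φ` by `0` to the sets that are not convex bodies, in particular to `∅`. -/
noncomputable def extend (φ : ConvexBody E → ℂ) (A : Set E) : ℂ :=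
  if h : Convex ℝ A ∧ IsCompact A ∧ A.Nonempty then φ ⟨A, h.1, h.2.1, h.2.2⟩ else 0

theorem extend_coe (φ : ConvexBody E → ℂ) (K : ConvexBody E) : extend φ (K : Set E) = φ K := by
  unfold extend
  rw [dif_pos ⟨K.convex, K.isCompact, K.nonempty⟩]
  rfl

theorem extend_of (φ : ConvexBody E → ℂ) {A : Set E} (h₁ : Convex ℝ A) (h₂ : IsCompact A)
    (h₃ : A.Nonempty) : extend φ A = φ ⟨A, h₁, h₂, h₃⟩ :=
  extend_coe φ ⟨A, h₁, h₂, h₃⟩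

theorem extend_empty (φ : ConvexBody E → ℂ) : extend φ (∅ : Set E) = 0 := by
  unfold extend
  rw [dif_neg]
  simp

theorem isSetVal_extend {φ : ConvexBody E → ℂ} (hv : IsValuation φ)
    (ht : IsTranslationInvariant φ) : IsSetVal (extend φ) where
  empty := extend_empty φ
  union A B hA hB cA cB cAB := by
    rcases A.eq_empty_or_nonempty with rfl | nA
    · simp [extend_empty]
    rcases B.eq_empty_or_nonempty with rfl | nB
    · simp [extend_empty]
    obtain ⟨a, ha⟩ := nA
    obtain ⟨b, hb⟩ := nB
    obtain ⟨z, -, hz⟩ := exists_mem_segment_inter hA.isClosed hB.isClosed cAB ha hb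
    rw [extend_of φ cAB (hA.union hB) ⟨a, Or.inl ha⟩, extend_of φ cA hA ⟨a, ha⟩,
      extend_of φ cB hB ⟨b, hb⟩, extend_of φ (cA.inter cB) (hA.inter hB) ⟨z, hz⟩]
    exact hv _ _ _ _ rfl rfl
  vadd x A := by
    by_cases h : Convex ℝ A ∧ IsCompact A ∧ A.Nonempty
    · obtain ⟨h₁, h₂, h₃⟩ := h
      rw [extend_of φ h₁ h₂ h₃, ← ht _ x, ← extend_coe φ]
      congr 1
      rw [ConvexBody.coe_add]
      simp [ConvexBody.singletonBody, ← Set.image_vadd, add_comm]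
    · have h' : ¬ (Convex ℝ (x +ᵥ A) ∧ IsCompact (x +ᵥ A) ∧ (x +ᵥ A).Nonempty) := by
        rintro ⟨h₁, h₂, h₃⟩
        have e : A = -x +ᵥ (x +ᵥ A) := by simp
        refine h ⟨?_, ?_, ?_⟩
        · rw [e]; exact h₁.vadd _
        · rw [e]; exact h₂.vadd _
        · rw [e]; exact h₃.vadd_set
      unfold extend
      rw [dif_neg h, dif_neg h']

end Sets

/-! ### Discrete antiderivatives -/

section Discrete

/-- Every polynomial is the forward difference, at the natural numbers, of a polynomial. -/
theorem exists_discrete_antideriv (q : ℂ[X]) :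
    ∃ Q : ℂ[X], ∀ k : ℕ, Q.eval ((k + 1 : ℕ) : ℂ) - Q.eval (k : ℂ) = q.eval (k : ℂ) := by
  induction q using Polynomial.induction_on' with
  | add p q hp hq =>
    obtain ⟨P, hP⟩ := hp
    obtain ⟨Q, hQ⟩ := hq
    refine ⟨P + Q, fun k => ?_⟩
    rw [eval_add, eval_add, eval_add, ← hP, ← hQ]
    ring
  | monomial d a =>
    -- `S` computes the sums of `d`-th powers, by Faulhaber's formula
    let S : ℂ[X] := ∑ i ∈ Finset.range (d + 1),
      C ((_root_.bernoulli i * ((d + 1).choose i) / (d + 1) : ℚ) : ℂ) * X ^ (d + 1 - i)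
    have hS : ∀ k : ℕ, S.eval (k : ℂ) = ∑ j ∈ Finset.range k, (j : ℂ) ^ d := by
      intro k
      have := congrArg (fun x : ℚ => (x : ℂ)) (sum_range_pow k d)
      simp only [S, eval_finsetSum, eval_mul, eval_C, eval_pow, eval_X]
      push_cast at this ⊢
      rw [this]
      refine Finset.sum_congr rfl fun i _ => ?_
      ring
    refine ⟨C a * S, fun k => ?_⟩
    simp only [eval_mul, eval_C, hS, Finset.sum_range_succ, eval_monomial]
    ring

theorem eventually_poly_of_diff {g : ℕ → ℂ} {m : ℕ} (q : ℂ[X])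
    (h : ∀ k, m ≤ k → g (k + 1) - g k = q.eval (k : ℂ)) :
    ∃ Q : ℂ[X], ∀ k, m ≤ k → g k = Q.eval (k : ℂ) := by
  obtain ⟨Q, hQ⟩ := exists_discrete_antideriv q
  refine ⟨Q + C (g m - Q.eval (m : ℂ)), fun k hk => ?_⟩
  induction k, hk using Nat.le_induction with
  | base => simp
  | succ k hk ih =>
    have h1 := h k hk
    have h2 := hQ k
    rw [eval_add, eval_C] at ih ⊢
    linear_combination h1 + ih - h2

end Discrete

/-! ### Dilates of the standard simplex -/

section Simplex

variable {ι : Type*} [Fintype ι]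

/-- The part in `C` of the `k`-th dilate of the standard simplex. -/
def slice (C : Set (ι → ℝ)) (k : ℕ) : Set (ι → ℝ) :=
  {x | (∀ i, 0 ≤ x i) ∧ ∑ i, x i = k ∧ x ∈ C}

theorem isCompact_slice {C : Set (ι → ℝ)} (hC : IsClosed C) (k : ℕ) : IsCompact (slice C k) := by
  refine (isCompact_Icc (a := (0 : ι → ℝ)) (b := fun _ => (k : ℝ))).of_isClosed_subset ?_ ?_
  · have h1 : IsClosed {x : ι → ℝ | ∀ i, 0 ≤ x i} := by
      simp only [Set.ofPred_forall]
      exact isClosed_iInter fun i => isClosed_le continuous_const (continuous_apply i)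
    have h2 : IsClosed {x : ι → ℝ | ∑ i, x i = k} :=
      isClosed_eq (by fun_prop) continuous_const
    exact h1.inter (h2.inter hC)
  · rintro x ⟨h0, hk, -⟩
    refine ⟨h0, fun i => ?_⟩
    rw [← hk]
    exact Finset.single_le_sum (fun j _ => h0 j) (Finset.mem_univ i)

theorem convex_slice {C : Set (ι → ℝ)} (hC : Convex ℝ C) (k : ℕ) : Convex ℝ (slice C k) := by
  rintro x ⟨hx0, hxk, hxC⟩ y ⟨hy0, hyk, hyC⟩ a b ha hb hab
  refine ⟨fun i => ?_, ?_, hC hxC hyC ha hb hab⟩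
  · have := hx0 i
    have := hy0 i
    simp only [Pi.add_apply, Pi.smul_apply, smul_eq_mul]
    positivity
  · simp only [Pi.add_apply, Pi.smul_apply, smul_eq_mul, Finset.sum_add_distrib,
      ← Finset.mul_sum, hxk, hyk]
    rw [← add_mul, hab, one_mul]

/-- If `C` is invariant under unit shifts in the coordinates of `F` and bounds all other coordinates
by `1`, then the values on `slice C k` are polynomial in `k` for `k > card ι`. In the induction step,
`slice C (k + 1)` is cut along `x i = 1`: the part `1 ≤ x i` is a translate of `slice C k`, while the
part `x i ≤ 1` and the common face are slices with `i` removed from `F`. For `F = ∅` the slices are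
empty. -/
theorem slice_poly [DecidableEq ι] {ψ : Set (ι → ℝ) → ℂ} (hψ : IsSetVal ψ) (F : Finset ι) :
    ∀ C : Set (ι → ℝ), IsClosed C → Convex ℝ C →
      (∀ i ∈ F, ∀ x, x ∈ C ↔ Pi.single i 1 + x ∈ C) →
      (∀ j ∉ F, ∀ x ∈ C, x j ≤ 1) →
      ∃ q : ℂ[X], ∀ k : ℕ, Fintype.card ι + 1 ≤ k → ψ (slice C k) = q.eval (k : ℂ) := by
  induction F using Finset.induction_on with
  | empty =>
    intro C _ _ _ hb
    refine ⟨0, fun k hk => ?_⟩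
    have : slice C k = ∅ := by
      refine Set.eq_empty_of_forall_notMem ?_
      rintro x ⟨-, hxk, hxC⟩
      have h1 : ∑ i, x i ≤ ∑ _i : ι, (1 : ℝ) :=
        Finset.sum_le_sum fun i _ => hb i (Finset.notMem_empty i) x hxC
      rw [hxk, Finset.sum_const, Finset.card_univ, nsmul_eq_mul, mul_one, Nat.cast_le] at h1
      omega
    rw [this, hψ.empty, eval_zero]
  | insert i F hiF ih =>
    intro C hC cC hinv hb
    have hle : IsClosed {x : ι → ℝ | x i ≤ 1} := isClosed_le (continuous_apply i) continuous_const
    have hge : IsClosed {x : ι → ℝ | 1 ≤ x i} := isClosed_le continuous_const (continuous_apply i)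
    have cle : Convex ℝ {x : ι → ℝ | x i ≤ 1} :=
      convex_halfSpace_le (LinearMap.proj (R := ℝ) (φ := fun _ : ι => ℝ) i).isLinear 1
    have cge : Convex ℝ {x : ι → ℝ | 1 ≤ x i} :=
      convex_halfSpace_ge (LinearMap.proj (R := ℝ) (φ := fun _ : ι => ℝ) i).isLinear 1
    have hne : ∀ j ∈ F, ∀ x : ι → ℝ, (Pi.single j (1 : ℝ) + x : ι → ℝ) i = x i := by
      intro j hj x
      have : i ≠ j := fun h => hiF (h ▸ hj)
      simp [this]
    obtain ⟨q₁, hq₁⟩ := ih (C ∩ {x | x i ≤ 1}) (hC.inter hle) (cC.inter cle)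
      (fun j hj x => by
        simp only [Set.mem_inter_iff, Set.mem_ofPred_eq, hne j hj x]
        rw [← hinv j (Finset.mem_insert_of_mem hj) x])
      (fun j hj x hx => by
        by_cases hji : j = i
        · subst hji; exact hx.2
        · exact hb j (by simp [hji, hj]) x hx.1)
    obtain ⟨q₂, hq₂⟩ := ih (C ∩ ({x | x i ≤ 1} ∩ {x | 1 ≤ x i})) (hC.inter (hle.inter hge))
      (cC.inter (cle.inter cge))
      (fun j hj x => by
        simp only [Set.mem_inter_iff, Set.mem_ofPred_eq, hne j hj x]
        rw [← hinv j (Finset.mem_insert_of_mem hj) x])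
      (fun j hj x hx => by
        by_cases hji : j = i
        · subst hji; exact hx.2.1
        · exact hb j (by simp [hji, hj]) x hx.1)
    refine eventually_poly_of_diff (q₁.comp (X + 1) - q₂.comp (X + 1)) fun k hk => ?_
    have hshift : slice (C ∩ {x | 1 ≤ x i}) (k + 1) =
        (Pi.single i (1 : ℝ) : ι → ℝ) +ᵥ slice C k := by
      ext x
      rw [Set.mem_vadd_set_iff_neg_vadd_mem, vadd_eq_add]
      have hsum : ∑ j, (-(Pi.single i (1 : ℝ) : ι → ℝ) + x) j = -1 + ∑ j, x j := by
        simp [Finset.sum_add_distrib]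
      have hmem : x ∈ C ↔ -(Pi.single i (1 : ℝ) : ι → ℝ) + x ∈ C := by
        rw [hinv i (Finset.mem_insert_self i F) (-(Pi.single i (1 : ℝ) : ι → ℝ) + x),
          add_neg_cancel_left]
      constructor
      · rintro ⟨h0, hs, hxC, hxi⟩
        refine ⟨fun j => ?_, ?_, hmem.1 hxC⟩
        · by_cases hj : j = i
          · subst hj
            have : 1 ≤ x j := hxi
            simp [this]
          · simpa [hj] using h0 j
        · rw [hsum, hs]; push_cast; ring
      · rintro ⟨h0, hs, hxC⟩
        have hi := h0 i
        simp only [Pi.add_apply, Pi.neg_apply, Pi.single_eq_same] at hi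
        refine ⟨fun j => ?_, ?_, hmem.2 hxC, ?_⟩
        · by_cases hj : j = i
          · subst hj; linarith
          · simpa [hj] using h0 j
        · rw [hsum] at hs; push_cast; linarith
        · change 1 ≤ x i
          linarith
    have hunion : slice C (k + 1) =
        slice (C ∩ {x | x i ≤ 1}) (k + 1) ∪ slice (C ∩ {x | 1 ≤ x i}) (k + 1) := by
      ext x
      simp only [slice, Set.mem_union, Set.mem_ofPred_eq, Set.mem_inter_iff]
      have := le_total (x i) 1
      tauto
    have hinter : slice (C ∩ {x | x i ≤ 1}) (k + 1) ∩ slice (C ∩ {x | 1 ≤ x i}) (k + 1) =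
        slice (C ∩ ({x | x i ≤ 1} ∩ {x | 1 ≤ x i})) (k + 1) := by
      ext x
      simp only [slice, Set.mem_ofPred_eq, Set.mem_inter_iff]
      tauto
    have key := hψ.union _ _ (isCompact_slice (hC.inter hle) (k + 1))
      (isCompact_slice (hC.inter hge) (k + 1)) (convex_slice (cC.inter cle) (k + 1))
      (convex_slice (cC.inter cge) (k + 1)) (by rw [← hunion]; exact convex_slice cC _)
    rw [← hunion, hinter, hshift, hψ.vadd, hq₁ (k + 1) (by omega), hq₂ (k + 1) (by omega)] at key
    rw [key]
    simp
    ring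

theorem smul_stdSimplex (k : ℕ) (hk : 1 ≤ k) :
    (k : ℝ≥0) • stdSimplex ℝ ι = slice Set.univ k := by
  have hk0 : (k : ℝ) ≠ 0 := by positivity
  have hk0' : (k : ℝ≥0) ≠ 0 := by positivity
  ext x
  rw [Set.mem_smul_set_iff_inv_smul_mem₀ hk0']
  simp only [stdSimplex, slice, Set.mem_ofPred_eq, Set.mem_univ, and_true, NNReal.smul_def,
    Pi.smul_apply, smul_eq_mul, NNReal.coe_inv, NNReal.coe_natCast, ← Finset.mul_sum]
  have hpos : (0 : ℝ) < (k : ℝ)⁻¹ := by positivity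
  refine and_congr (forall_congr' fun i => ?_) ?_
  · exact mul_nonneg_iff_of_pos_left hpos
  · rw [inv_mul_eq_one₀ hk0, eq_comm]

end Simplex

/-! ### Cutting along a grid -/

section Growth

variable {V : Type*} [NormedAddCommGroup V] [NormedSpace ℝ V]

/-- If `ψ` is bounded by `M` on the convex sets in the box with sides `[0, ε]`, then on a box whose
sides in the directions of `F` have length `(N + 1) ε` it is bounded by `M (2 N + 1) ^ #F`: along
each of these directions there are `N + 1` slabs and `N` separating faces. The vectors `e` are dual to
the coordinate functionals `f` and serve to translate the pieces back. -/
theorem norm_le_of_box {ι : Type*} [DecidableEq ι] {ψ : Set V → ℂ} (hψ : IsSetVal ψ)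
    (f : ι → V →L[ℝ] ℝ) (e : ι → V) (hfe : ∀ i j, f i (e j) = if i = j then 1 else 0)
    {ε M : ℝ}
    (hM : ∀ A : Set V, IsCompact A → Convex ℝ A → (∀ x ∈ A, ∀ i, 0 ≤ f i x ∧ f i x ≤ ε) →
      ‖ψ A‖ ≤ M) (N : ℕ) (F : Finset ι) :
    ∀ A : Set V, IsCompact A → Convex ℝ A →
      (∀ x ∈ A, ∀ i ∈ F, 0 ≤ f i x ∧ f i x ≤ (N + 1) * ε) →
      (∀ x ∈ A, ∀ i ∉ F, 0 ≤ f i x ∧ f i x ≤ ε) → ‖ψ A‖ ≤ M * (2 * N + 1) ^ F.card := by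
  induction F using Finset.induction_on with
  | empty =>
    intro A hA cA _ h
    simpa using hM A hA cA fun x hx i => h x hx i (Finset.notMem_empty i)
  | insert i F hiF ih =>
    suffices H : ∀ k : ℕ, ∀ A : Set V, IsCompact A → Convex ℝ A →
        (∀ x ∈ A, ∀ j ∈ F, 0 ≤ f j x ∧ f j x ≤ (N + 1) * ε) →
        (∀ x ∈ A, 0 ≤ f i x ∧ f i x ≤ (k + 1) * ε) →
        (∀ x ∈ A, ∀ j ∉ insert i F, 0 ≤ f j x ∧ f j x ≤ ε) →
        ‖ψ A‖ ≤ M * (2 * N + 1) ^ F.card * (2 * k + 1) by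
      intro A hA cA h1 h2
      rw [Finset.card_insert_of_notMem hiF, pow_succ, ← mul_assoc]
      exact H N A hA cA (fun x hx j hj => h1 x hx j (Finset.mem_insert_of_mem hj))
        (fun x hx => h1 x hx i (Finset.mem_insert_self i F)) h2
    intro k
    induction k with
    | zero =>
      intro A hA cA h1 h2 h3
      simp only [Nat.cast_zero, mul_zero, zero_add, mul_one, one_mul] at h2 ⊢
      refine ih A hA cA h1 fun x hx j hj => ?_
      by_cases hji : j = i
      · subst hji; exact h2 x hx
      · exact h3 x hx j (by simp [hji, hj])
    | succ k ihk =>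
      intro A hA cA h1 h2 h3
      set c : ℝ := (k + 1) * ε with hc
      have hlin : IsLinearMap ℝ (f i) := (f i : V →ₗ[ℝ] ℝ).isLinear
      have hle : IsClosed {x : V | f i x ≤ c} := isClosed_le (f i).continuous continuous_const
      have hge : IsClosed {x : V | c ≤ f i x} := isClosed_le continuous_const (f i).continuous
      have cle : Convex ℝ {x : V | f i x ≤ c} := convex_halfSpace_le hlin c
      have cge : Convex ℝ {x : V | c ≤ f i x} := convex_halfSpace_ge hlin c
      have hunion : A = (A ∩ {x | f i x ≤ c}) ∪ (A ∩ {x | c ≤ f i x}) := by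
        rw [← Set.inter_union_distrib_left, eq_comm, Set.inter_eq_left]
        exact fun x _ => le_total (f i x) c
      have key := hψ.union _ _ (hA.inter_right hle) (hA.inter_right hge) (cA.inter cle)
        (cA.inter cge) (by rw [← hunion]; exact cA)
      rw [← hunion] at key
      have b1 : ‖ψ (A ∩ {x | f i x ≤ c})‖ ≤ M * (2 * N + 1) ^ F.card * (2 * k + 1) :=
        ihk _ (hA.inter_right hle) (cA.inter cle) (fun x hx => h1 x hx.1)
          (fun x hx => ⟨(h2 x hx.1).1, hx.2⟩) (fun x hx => h3 x hx.1)
      -- the part beyond `c` lies in a slab of width `ε`, so it can be translated back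
      have b2 : ∀ B : Set V, B ⊆ A → IsCompact B → Convex ℝ B → (∀ x ∈ B, c ≤ f i x) →
          ‖ψ B‖ ≤ M * (2 * N + 1) ^ F.card := by
        intro B hBA hB cB hcB
        rw [← hψ.vadd (-(c • e i)) B]
        have hval : ∀ j ≠ i, ∀ x, f j (-(c • e i) + x) = f j x := by
          intro j hj x
          simp [hfe, hj]
        have hvali : ∀ x, f i (-(c • e i) + x) = -c + f i x := by
          intro x
          simp [hfe]
        refine ih _ (hB.vadd _) (cB.vadd _) ?_ ?_
        · rintro _ ⟨x, hx, rfl⟩ j hj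
          have hji : j ≠ i := fun h => hiF (h ▸ hj)
          simp only [vadd_eq_add, hval j hji]
          exact h1 x (hBA hx) j hj
        · rintro _ ⟨x, hx, rfl⟩ j hj
          by_cases hji : j = i
          · subst hji
            simp only [vadd_eq_add, hvali]
            have := hcB x hx
            have h5 := (h2 x (hBA hx)).2
            push_cast at h5
            constructor <;> linarith
          · simp only [vadd_eq_add, hval j hji]
            exact h3 x (hBA hx) j (by simp [hji, hj])
      have b3 := b2 (A ∩ {x | c ≤ f i x}) Set.inter_subset_left (hA.inter_right hge)
        (cA.inter cge) (fun x hx => hx.2)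
      have b4 := b2 (A ∩ {x | f i x ≤ c} ∩ (A ∩ {x | c ≤ f i x}))
        (Set.inter_subset_left.trans Set.inter_subset_left)
        ((hA.inter_right hle).inter (hA.inter_right hge))
        ((cA.inter cle).inter (cA.inter cge)) (fun x hx => hx.2.2)
      rw [key]
      refine (norm_sub_le _ _).trans ?_
      have := norm_add_le (ψ (A ∩ {x | f i x ≤ c})) (ψ (A ∩ {x | c ≤ f i x}))
      push_cast
      linarith

end Growth

/-! ### Convex bodies: continuity, Minkowski sums, growth -/

section Body

variable {V : Type*} [NormedAddCommGroup V] [NormedSpace ℝ V]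

theorem dist_le_of_forall {K L : ConvexBody V} {r : ℝ} (hr : 0 ≤ r)
    (h₁ : ∀ x ∈ (K : Set V), ∃ y ∈ (L : Set V), dist x y ≤ r)
    (h₂ : ∀ y ∈ (L : Set V), ∃ x ∈ (K : Set V), dist y x ≤ r) : dist K L ≤ r := by
  rw [← ConvexBody.hausdorffDist_coe]
  exact Metric.hausdorffDist_le_of_mem_dist hr h₁ h₂

theorem exists_dist_le (K L : ConvexBody V) {x : V} (hx : x ∈ (K : Set V)) :
    ∃ y ∈ (L : Set V), dist x y ≤ dist K L := by
  obtain ⟨y, hy, h⟩ := L.isCompact.exists_infDist_eq_dist L.nonempty x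
  refine ⟨y, hy, ?_⟩
  rw [← h, ← ConvexBody.hausdorffDist_coe]
  exact Metric.infDist_le_hausdorffDist_of_mem hx ConvexBody.hausdorffEDist_ne_top

theorem continuous_add_right (L : ConvexBody V) : Continuous fun K : ConvexBody V => K + L := by
  refine LipschitzWith.continuous (K := 1) (LipschitzWith.of_dist_le_mul fun K K' => ?_)
  have key : ∀ K K' : ConvexBody V, ∀ x ∈ ((K + L : ConvexBody V) : Set V),
      ∃ y ∈ ((K' + L : ConvexBody V) : Set V), dist x y ≤ dist K K' := by
    rintro K K' _ ⟨a, ha, l, hl, rfl⟩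
    obtain ⟨b, hb, h⟩ := exists_dist_le K K' ha
    exact ⟨b + l, Set.add_mem_add hb hl, by simpa using h⟩
  rw [NNReal.coe_one, one_mul]
  exact dist_le_of_forall dist_nonneg (key K K') (dist_comm K K' ▸ key K' K)

theorem continuous_smul_left (t : ℝ≥0) : Continuous fun K : ConvexBody V => t • K := by
  refine LipschitzWith.continuous (K := t) (LipschitzWith.of_dist_le_mul fun K K' => ?_)
  have key : ∀ K K' : ConvexBody V, ∀ x ∈ ((t • K : ConvexBody V) : Set V),
      ∃ y ∈ ((t • K' : ConvexBody V) : Set V), dist x y ≤ t * dist K K' := by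
    rintro K K' _ ⟨a, ha, rfl⟩
    obtain ⟨b, hb, h⟩ := exists_dist_le K K' ha
    refine ⟨t • b, Set.smul_mem_smul_set hb, ?_⟩
    simp only [NNReal.smul_def, dist_smul₀, Real.norm_eq_abs, NNReal.abs_eq]
    gcongr
  exact dist_le_of_forall (by positivity) (key K K') (dist_comm K K' ▸ key K' K)

theorem continuous_smul_right (K : ConvexBody V) : Continuous fun t : ℝ≥0 => t • K := by
  obtain ⟨R, hR0, hR⟩ := K.isBounded.exists_pos_norm_le
  refine LipschitzWith.continuous (K := ⟨R, hR0.le⟩) (LipschitzWith.of_dist_le_mul fun t t' => ?_)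
  have key : ∀ t t' : ℝ≥0, ∀ x ∈ ((t • K : ConvexBody V) : Set V),
      ∃ y ∈ ((t' • K : ConvexBody V) : Set V), dist x y ≤ R * dist t t' := by
    rintro t t' _ ⟨a, ha, rfl⟩
    refine ⟨t' • a, Set.smul_mem_smul_set ha, ?_⟩
    simp only [NNReal.smul_def]
    rw [dist_eq_norm, ← sub_smul, norm_smul, mul_comm, NNReal.dist_eq, Real.norm_eq_abs]
    gcongr
    exact hR a ha
  exact dist_le_of_forall (by positivity) (key t t') (dist_comm t t' ▸ key t' t)

/-- `K + L` is the image of `K × L` under addition, so `image_inter_of_convex_union` gives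
`(A ∩ B) + L = (A + L) ∩ (B + L)` when `A ∪ B` is convex. -/
theorem memVal_add_right {φ : ConvexBody V → ℂ} (hφ : MemVal φ) (L : ConvexBody V) :
    MemVal fun K => φ (K + L) := by
  obtain ⟨hv, ht, hc⟩ := hφ
  refine ⟨fun A B C D hC hD => ?_, fun K x => ?_, hc.comp (continuous_add_right L)⟩
  · refine hv _ _ _ _ ?_ ?_
    · simp only [ConvexBody.coe_add, hC, Set.union_add]
    · have hAL : ∀ K : ConvexBody V, ((K + L : ConvexBody V) : Set V) =
          (LinearMap.fst ℝ V V + LinearMap.snd ℝ V V) '' ((K : Set V) ×ˢ (L : Set V)) := by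
        intro K
        rw [ConvexBody.coe_add, ← Set.add_image_prod]
        rfl
      rw [hAL, hAL, hAL, ← image_inter_of_convex_union _ (A.isClosed.prod L.isClosed)
        (B.isClosed.prod L.isClosed), hD, Set.inter_prod]
      rw [← Set.union_prod, ← hC]
      exact C.convex.prod L.convex
  · have : K + ConvexBody.singletonBody x + L = K + L + ConvexBody.singletonBody x := by abel
    simp only [this]
    exact ht _ x

theorem norm_sum_coord_le {ι : Type*} [Fintype ι] (b : Module.Basis ι ℝ V) {ε : ℝ} (x : V)
    (hx : ∀ i, 0 ≤ b.repr x i ∧ b.repr x i ≤ ε) : ‖x‖ ≤ ε * ∑ i, ‖b i‖ := by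
  conv_lhs => rw [← b.sum_repr x]
  refine (norm_sum_le _ _).trans ?_
  rw [Finset.mul_sum]
  refine Finset.sum_le_sum fun i _ => ?_
  rw [norm_smul, Real.norm_eq_abs, abs_of_nonneg (hx i).1]
  exact mul_le_mul_of_nonneg_right (hx i).2 (norm_nonneg _)

variable [FiniteDimensional ℝ V]

/-- `φ (k K) = O(kⁿ)` with `n = dim V`. -/
theorem exists_growth {φ : ConvexBody V → ℂ} (hφ : MemVal φ) (K : ConvexBody V) :
    ∃ c : ℝ, ∀ k : ℕ, 1 ≤ k → ‖φ ((k : ℝ≥0) • K)‖ ≤ c * (k : ℝ) ^ Module.finrank ℝ V := by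
  obtain ⟨hv, ht, hc⟩ := hφ
  -- on bodies within distance `δ` of `{0}` the values of `φ` are bounded by `‖φ 0‖ + 1`
  obtain ⟨δ, hδ, hδφ⟩ := Metric.continuous_iff.1 hc 0 1 one_pos
  set b := Module.finBasis ℝ V with hb
  set S : ℝ := ∑ i, ‖b i‖ with hS
  have hS0 : 0 ≤ S := Finset.sum_nonneg fun i _ => norm_nonneg _
  set ε : ℝ := δ / 2 / (S + 1) with hεdef
  have hε : 0 < ε := by positivity
  have hεS : ε * S ≤ δ / 2 := by
    rw [hεdef, div_mul_eq_mul_div, div_le_iff₀ (by positivity)]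
    nlinarith
  let f : Fin (Module.finrank ℝ V) → V →L[ℝ] ℝ := fun i => (b.coord i).toContinuousLinearMap
  have hf : ∀ i x, f i x = b.repr x i := fun i x => rfl
  have hψ := isSetVal_extend hv ht
  set M : ℝ := ‖φ 0‖ + 1 with hMdef
  have hM : ∀ A : Set V, IsCompact A → Convex ℝ A → (∀ x ∈ A, ∀ i, 0 ≤ f i x ∧ f i x ≤ ε) →
      ‖extend φ A‖ ≤ M := by
    intro A hA cA h
    rcases A.eq_empty_or_nonempty with rfl | nA
    · rw [extend_empty, norm_zero]; positivity
    rw [extend_of φ cA hA nA]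
    have hd : dist (⟨A, cA, hA, nA⟩ : ConvexBody V) 0 ≤ δ / 2 := by
      have hn : ∀ x ∈ A, dist x 0 ≤ δ / 2 := fun x hx => by
        rw [dist_zero_right]
        exact (norm_sum_coord_le b x (h x hx)).trans hεS
      refine dist_le_of_forall (by positivity) (fun x hx => ⟨0, rfl, hn x hx⟩) ?_
      rintro y (rfl : y = 0)
      obtain ⟨a, ha⟩ := nA
      exact ⟨a, ha, by rw [dist_comm]; exact hn a ha⟩
    have h1 := hδφ _ (hd.trans_lt (by linarith))
    rw [dist_eq_norm] at h1
    have h2 := norm_le_norm_add_norm_sub' (φ ⟨A, cA, hA, nA⟩) (φ 0)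
    linarith
  -- a natural number `R` with all coordinates of `K` in `[-R ε, R ε]`
  obtain ⟨R, hR⟩ : ∃ R : ℕ, ∀ x ∈ (K : Set V), ∀ i, |f i x| ≤ R * ε := by
    have : ∀ i, ∃ r : ℝ, ∀ x ∈ (K : Set V), |f i x| ≤ r := fun i => by
      obtain ⟨r, hr⟩ := (K.isCompact.image (f i).continuous).isBounded.exists_norm_le
      exact ⟨r, fun x hx => hr _ ⟨x, hx, rfl⟩⟩
    choose r hr using this
    obtain ⟨R, hR⟩ := exists_nat_ge ((∑ i, |r i|) / ε)
    refine ⟨R, fun x hx i => ?_⟩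
    rw [div_le_iff₀ hε] at hR
    exact ((hr i x hx).trans (le_abs_self _)).trans
      ((Finset.single_le_sum (f := fun i => |r i|) (fun j _ => abs_nonneg _)
        (Finset.mem_univ i)).trans hR)
  refine ⟨M * (4 * R + 1) ^ Module.finrank ℝ V, fun k hk => ?_⟩
  have hk1 : (1 : ℝ) ≤ k := by exact_mod_cast hk
  -- translate `k K` into the positive orthant
  set v : V := ∑ i, (k * (R * ε)) • b i with hvdef
  have hfv : ∀ i, f i v = k * (R * ε) := by
    intro i
    rw [hf, hvdef, b.repr_sum_self]
  have hbox := norm_le_of_box hψ f b (fun i j => by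
      rw [hf, b.repr_self, Finsupp.single_apply]; simp only [eq_comm]) hM (2 * (R * k))
    Finset.univ (v +ᵥ (((k : ℝ≥0) • K : ConvexBody V) : Set V))
    (((k : ℝ≥0) • K).isCompact.vadd v) (((k : ℝ≥0) • K).convex.vadd v) ?_
    (fun x _ i hi => absurd (Finset.mem_univ i) hi)
  · rw [hψ.vadd, extend_coe, Finset.card_univ, Fintype.card_fin] at hbox
    refine hbox.trans ?_
    rw [mul_assoc, ← mul_pow]
    have : (0 : ℝ) ≤ M := by positivity
    gcongr
    push_cast
    nlinarith
  · rintro _ ⟨_, ⟨x, hx, rfl⟩, rfl⟩ i -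
    have h1 := abs_le.1 (hR x hx i)
    have h2 : f i (v +ᵥ (k : ℝ≥0) • x) = k * (R * ε) + k * f i x := by
      rw [vadd_eq_add, map_add, hfv, NNReal.smul_def, map_smul]
      simp
    change 0 ≤ f i (v +ᵥ (k : ℝ≥0) • x) ∧ f i (v +ᵥ (k : ℝ≥0) • x) ≤ _
    rw [h2]
    push_cast
    constructor
    · nlinarith
    · nlinarith

end Body

/-! ### Polynomials determined by their values at integers -/

section Polynomial

open Asymptotics

theorem natDegree_le_of_growth {q : ℂ[X]} {n : ℕ} {c : ℝ} {m : ℕ}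
    (h : ∀ k : ℕ, m ≤ k → ‖q.eval (k : ℂ)‖ ≤ c * (k : ℝ) ^ n) : q.natDegree ≤ n := by
  by_contra! hlt
  have hq : q ≠ 0 := by rintro rfl; simp at hlt
  have hdeg : ((X : ℂ[X]) ^ n).degree < q.degree := by
    rw [degree_X_pow, degree_eq_natDegree hq]
    exact_mod_cast hlt
  have htend : Tendsto (fun k : ℕ => (k : ℂ)) atTop (Bornology.cobounded ℂ) := by
    rw [← tendsto_norm_atTop_iff_cobounded]
    simpa using tendsto_natCast_atTop_atTop (R := ℝ)
  have h1 : (fun k : ℕ => eval (k : ℂ) ((X : ℂ[X]) ^ n)) =o[atTop] fun k : ℕ => eval (k : ℂ) q :=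
    (isLittleO_cobounded_of_degree_lt hdeg).comp_tendsto htend
  have h2 : (fun k : ℕ => eval (k : ℂ) q) =O[atTop] fun k : ℕ => eval (k : ℂ) ((X : ℂ[X]) ^ n) := by
    refine IsBigO.of_bound c ?_
    filter_upwards [eventually_ge_atTop m] with k hk
    simpa using h k hk
  refine isLittleO_irrefl (Eventually.frequently ?_) (h1.trans_isBigO h2)
  filter_upwards [eventually_ge_atTop 1] with k hk
  have : (k : ℂ) ≠ 0 := by exact_mod_cast (by omega : k ≠ 0)
  simp [this]

theorem poly_eq_of_nat {p q : ℂ[X]} {m : ℕ}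
    (h : ∀ k : ℕ, m ≤ k → p.eval (k : ℂ) = q.eval (k : ℂ)) : p = q := by
  refine Polynomial.eq_of_infinite_eval_eq p q ?_
  refine ((Set.Ici_infinite m).image (Nat.cast_injective (R := ℂ)).injOn).mono ?_
  rintro _ ⟨k, hk, rfl⟩
  exact h k hk

end Polynomial

/-! ### Dilates of a single body -/

section OneBody

variable {V : Type*} [NormedAddCommGroup V] [NormedSpace ℝ V]

/-- The threshold `m` depends on the polytope only and not on the scale `r`; this uniformity is what
lets the scale tend to `0` in `polytope_poly`. -/
theorem polytope_nat_poly {φ : ConvexBody V → ℂ} (hφ : MemVal φ) (P : ConvexBody V) {s : Set V}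
    (hs : s.Finite) (hP : (P : Set V) = convexHull ℝ s) :
    ∃ m : ℕ, ∀ r : ℝ≥0, ∃ q : ℂ[X], ∀ k : ℕ, m ≤ k →
      φ (((k : ℝ≥0) * r) • P) = q.eval (k : ℂ) := by
  classical
  have hfin := hs.fintype
  have hfin' := hs.convexHull_eq_image (R := ℝ)
  have hfin'' : hs.fintype = hfin := Subsingleton.elim _ _
  rw [hfin''] at hfin'
  refine ⟨Fintype.card s + 1, fun r => ?_⟩
  let π : (s → ℝ) →L[ℝ] V :=
    (∑ x : s, (LinearMap.proj (R := ℝ) x).smulRight x.1).toContinuousLinearMap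
  have hπ : ⇑π '' stdSimplex ℝ s = P := by rw [hP, hfin']; rfl
  obtain ⟨q, hq⟩ := slice_poly ((isSetVal_extend hφ.1 hφ.2.1).comp_image ((r : ℝ) • π))
    Finset.univ Set.univ isClosed_univ convex_univ (by simp) (by simp)
  refine ⟨q, fun k hk => ?_⟩
  rw [← hq k hk, ← smul_stdSimplex k (by omega), ← extend_coe φ]
  congr 1
  rw [ConvexBody.coe_smul', ← hπ]
  ext y
  simp only [Set.mem_smul_set, Set.mem_image, exists_exists_and_eq_and]
  refine exists_congr fun x => and_congr_right fun _ => ?_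
  rw [NNReal.smul_def, NNReal.smul_def, smul_apply, map_smul, smul_smul,
    NNReal.coe_mul, mul_comm]

theorem exists_polytope_near (K : ConvexBody V) {ε : ℝ} (hε : 0 < ε) :
    ∃ (P : ConvexBody V) (s : Set V), s.Finite ∧ (P : Set V) = convexHull ℝ s ∧
      dist P K < ε := by
  obtain ⟨s, hsK, hs, hcov⟩ := K.isCompact.finite_cover_balls (half_pos hε)
  have hne : s.Nonempty := by
    obtain ⟨x, hx⟩ := K.nonempty
    obtain ⟨y, hy, -⟩ := Set.mem_iUnion₂.1 (hcov hx)
    exact ⟨y, hy⟩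
  refine ⟨⟨convexHull ℝ s, convex_convexHull ℝ s, hs.isCompact_convexHull ℝ, hne.convexHull⟩, s, hs,
    rfl, ?_⟩
  refine (dist_le_of_forall (half_pos hε).le (fun x hx => ⟨x, ?_, ?_⟩) fun y hy => ?_).trans_lt
    (half_lt_self hε)
  · exact convexHull_min hsK K.convex hx
  · rw [dist_self]; exact (half_pos hε).le
  · obtain ⟨z, hz, hyz⟩ := Set.mem_iUnion₂.1 (hcov hy)
    exact ⟨z, subset_convexHull ℝ s hz, hyz.le⟩

variable [FiniteDimensional ℝ V]

theorem polytope_poly {φ : ConvexBody V → ℂ} (hφ : MemVal φ) (P : ConvexBody V) {s : Set V}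
    (hs : s.Finite) (hP : (P : Set V) = convexHull ℝ s) :
    ∃ q : ℂ[X], q.natDegree ≤ Module.finrank ℝ V ∧
      ∀ t : ℝ≥0, φ (t • P) = q.eval ((t : ℝ) : ℂ) := by
  obtain ⟨m, hm⟩ := polytope_nat_poly hφ P hs hP
  obtain ⟨q, hq⟩ := hm 1
  simp only [mul_one] at hq
  refine ⟨q, ?_, fun t => ?_⟩
  · obtain ⟨c, hc⟩ := exists_growth hφ P
    refine natDegree_le_of_growth (c := c) (m := m + 1) fun k hk => ?_
    rw [← hq k (by omega)]
    exact hc k (by omega)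
  have hN : ∀ N k : ℕ, 1 ≤ N → m ≤ k →
      φ (((k : ℝ≥0) * (N : ℝ≥0)⁻¹) • P) = q.eval ((k : ℂ) * (N : ℂ)⁻¹) := by
    intro N k hN hk
    obtain ⟨p, hp⟩ := hm (N : ℝ≥0)⁻¹
    have hN0 : (N : ℂ) ≠ 0 := by exact_mod_cast (by omega : N ≠ 0)
    have hN0' : (N : ℝ≥0) ≠ 0 := by exact_mod_cast (by omega : N ≠ 0)
    -- both polynomials compute `φ (j • P)` at the integers `j`
    have hpq : p.comp (C (N : ℂ) * X) = q := by
      refine poly_eq_of_nat (m := m) fun j hj => ?_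
      have h1 := hp (N * j) (hj.trans (Nat.le_mul_of_pos_left j hN))
      have h2 : ((N * j : ℕ) : ℝ≥0) * (N : ℝ≥0)⁻¹ = j := by
        push_cast; field_simp
      rw [h2, hq j hj] at h1
      rw [h1]
      simp
    rw [hp k hk, ← hpq]
    simp only [eval_comp, eval_mul, eval_C, eval_X]
    congr 1
    field_simp
  -- `u N` has denominator `N` and numerator at least `m`, and tends to `t`
  let u : ℕ → ℝ≥0 := fun N => ((⌊(t : ℝ) * N⌋₊ + m : ℕ) : ℝ≥0) * (N : ℝ≥0)⁻¹
  have hu : Tendsto u atTop (𝓝 t) := by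
    have h1 : Tendsto (fun N : ℕ => (⌊(t : ℝ) * N⌋₊ : ℝ) / N) atTop (𝓝 (t : ℝ)) :=
      (tendsto_nat_floor_mul_div_atTop t.coe_nonneg).comp tendsto_natCast_atTop_atTop
    have h2 : Tendsto (fun N : ℕ => (m : ℝ) / N) atTop (𝓝 0) :=
      tendsto_const_div_atTop_nhds_zero_nat (m : ℝ)
    have h3 := h1.add h2
    rw [add_zero] at h3
    rw [← NNReal.tendsto_coe]
    refine h3.congr fun N => ?_
    simp only [u]
    push_cast
    ring
  have l1 : Tendsto (fun N => φ (u N • P)) atTop (𝓝 (φ (t • P))) :=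
    ((hφ.2.2.comp (continuous_smul_right P)).tendsto t).comp hu
  have l2 : Tendsto (fun N => q.eval ((u N : ℝ) : ℂ)) atTop (𝓝 (q.eval ((t : ℝ) : ℂ))) := by
    have hc : Continuous fun x : ℝ≥0 => q.eval ((x : ℝ) : ℂ) := by fun_prop
    exact (hc.tendsto t).comp hu
  refine tendsto_nhds_unique (l1.congr' ?_) l2
  filter_upwards [eventually_ge_atTop 1] with N h1
  rw [hN N _ h1 (Nat.le_add_left _ _)]
  simp [u]

/-- The `j`-th Lagrange basis polynomial for the nodes `0, 1, …, n`. -/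
noncomputable def node (n j : ℕ) : ℂ[X] :=
  Lagrange.basis (Finset.range (n + 1)) (fun i : ℕ => (i : ℂ)) j

/-- Polynomiality of degree at most `n` of `t ↦ φ (t K)`, in the form of the Lagrange interpolation
formula at `0, …, n`. Both sides are continuous in `K`, so polytopes suffice. -/
theorem smul_interpolation {φ : ConvexBody V → ℂ} (hφ : MemVal φ) (t : ℝ≥0) (K : ConvexBody V) :
    φ (t • K) = ∑ j ∈ Finset.range (Module.finrank ℝ V + 1),
      φ ((j : ℝ≥0) • K) * (node (Module.finrank ℝ V) j).eval ((t : ℝ) : ℂ) := by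
  have hcl : IsClosed {K : ConvexBody V | φ (t • K) =
      ∑ j ∈ Finset.range (Module.finrank ℝ V + 1),
      φ ((j : ℝ≥0) • K) * (node (Module.finrank ℝ V) j).eval ((t : ℝ) : ℂ)} := by
    refine isClosed_eq (hφ.2.2.comp (continuous_smul_left t)) ?_
    refine continuous_finsetSum _ fun j _ => Continuous.mul ?_ continuous_const
    exact hφ.2.2.comp (continuous_smul_left _)
  refine hcl.closure_subset (Metric.mem_closure_iff.2 fun ε hε => ?_)
  obtain ⟨P, s, hs, hP, hd⟩ := exists_polytope_near K hε
  refine ⟨P, ?_, by rwa [dist_comm]⟩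
  obtain ⟨q, hqdeg, hq⟩ := polytope_poly hφ P hs hP
  have hinterp := Lagrange.eq_interpolate (f := q) (s := Finset.range (Module.finrank ℝ V + 1))
    (v := fun i : ℕ => (i : ℂ)) Nat.cast_injective.injOn (by
      rw [Finset.card_range]
      exact degree_le_natDegree.trans_lt (by exact_mod_cast Nat.lt_succ_of_le hqdeg))
  change φ (t • P) = _
  rw [hq t]
  conv_lhs => rw [hinterp, Lagrange.interpolate_apply, eval_finsetSum]
  refine Finset.sum_congr rfl fun j _ => ?_
  rw [hq, eval_mul, eval_C]
  simp [node]

end OneBody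

/-! ### Minkowski combinations of several bodies -/

section ManyBodies

variable {V : Type*} [NormedAddCommGroup V] [NormedSpace ℝ V] [FiniteDimensional ℝ V]

/-- Polynomiality without control of the total degree, by interpolation in one variable at a
time. -/
theorem exists_mvPolynomial (s : ℕ) : ∀ {φ : ConvexBody V → ℂ}, MemVal φ →
    ∀ A : Fin s → ConvexBody V, ∃ p : MvPolynomial (Fin s) ℂ, ∀ lam : Fin s → ℝ≥0,
      φ (∑ i, lam i • A i) = MvPolynomial.eval (fun i => ((lam i : ℝ) : ℂ)) p := by
  induction s with
  | zero =>
    intro φ _ A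
    exact ⟨MvPolynomial.C (φ 0), fun lam => by simp⟩
  | succ s ih =>
    intro φ hφ A
    choose p hp using fun j : ℕ =>
      ih (memVal_add_right hφ ((j : ℝ≥0) • A 0)) (fun i => A i.succ)
    refine ⟨∑ j ∈ Finset.range (Module.finrank ℝ V + 1), MvPolynomial.rename Fin.succ (p j) *
      Polynomial.aeval (MvPolynomial.X 0) (node (Module.finrank ℝ V) j), fun lam => ?_⟩
    have h1 := smul_interpolation
      (memVal_add_right hφ (∑ i : Fin s, lam i.succ • A i.succ)) (lam 0) (A 0)
    rw [Fin.sum_univ_succ, h1, map_sum]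
    refine Finset.sum_congr rfl fun j _ => ?_
    have h2 := hp j (fun i => lam i.succ)
    rw [add_comm] at h2
    rw [h2, map_mul, MvPolynomial.eval_rename]
    congr 1
    have h3 : (MvPolynomial.eval fun i => ((lam i : ℝ) : ℂ)).comp
        (algebraMap ℂ (MvPolynomial (Fin (s + 1)) ℂ)) = RingHom.id ℂ := by
      ext; simp
    rw [Polynomial.aeval_def, Polynomial.hom_eval₂, h3, MvPolynomial.eval_X]
    rfl

theorem eval_smul_homogeneousComponent {s : ℕ} (p : MvPolynomial (Fin s) ℂ) (x : Fin s → ℂ)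
    (c : ℂ) (d : ℕ) : MvPolynomial.eval (fun i => c * x i) (MvPolynomial.homogeneousComponent d p) =
      c ^ d * MvPolynomial.eval x (MvPolynomial.homogeneousComponent d p) := by
  have h := MvPolynomial.homogeneousComponent_isHomogeneous d p
  rw [MvPolynomial.eval_eq, MvPolynomial.eval_eq, Finset.mul_sum]
  refine Finset.sum_congr rfl fun m hm => ?_
  rw [h.degree_eq_sum_deg_support hm, ← Finset.prod_pow_eq_pow_sum]
  simp only [mul_pow, Finset.prod_mul_distrib]
  ring

end ManyBodies

end McMullen

/-- **McMullen's theorem.** For a translation invariant continuous valuation `φ` on the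
convex bodies of a finite-dimensional real vector space `V` and any convex bodies
`A_1, …, A_s`, the function `(λ_1, …, λ_s) ↦ φ (λ_1 A_1 + ⋯ + λ_s A_s)` (with `λ_i ≥ 0`)
is a polynomial of total degree at most `n = dim V`. -/
theorem mcmullen_polynomiality {V : Type*} [NormedAddCommGroup V] [NormedSpace ℝ V]
    [FiniteDimensional ℝ V]
    (φ : ConvexBody V → ℂ) (hφ : MemVal φ)
    (s : ℕ) (hs : 1 ≤ s) (A : Fin s → ConvexBody V) :
    ∃ p : MvPolynomial (Fin s) ℂ, p.totalDegree ≤ Module.finrank ℝ V ∧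
      ∀ lam : Fin s → ℝ≥0,
        φ (∑ i, lam i • A i) = MvPolynomial.eval (fun i => ((lam i : ℝ) : ℂ)) p := by
  obtain ⟨p, hp⟩ := McMullen.exists_mvPolynomial s hφ A
  set n := Module.finrank ℝ V with hn
  refine ⟨∑ d ∈ Finset.range (n + 1), MvPolynomial.homogeneousComponent d p, ?_, fun lam => ?_⟩
  · refine MvPolynomial.totalDegree_finsetSum_le fun d hd => ?_
    exact (MvPolynomial.homogeneousComponent_isHomogeneous d p).totalDegree_le.trans
      (Nat.lt_succ_iff.1 (Finset.mem_range.1 hd))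
  set x : Fin s → ℂ := fun i => ((lam i : ℝ) : ℂ) with hx
  -- `φ` along the ray through `lam`, expanded into homogeneous components
  let Q : Polynomial ℂ := ∑ d ∈ Finset.range (p.totalDegree + 1), Polynomial.monomial d
    (MvPolynomial.eval x (MvPolynomial.homogeneousComponent d p))
  -- the same function, expanded by one-variable interpolation of degree at most `n`
  let q : Polynomial ℂ := ∑ j ∈ Finset.range (n + 1),
    Polynomial.C (φ ((j : ℝ≥0) • ∑ i, lam i • A i)) * McMullen.node n j
  have hQ : ∀ k : ℕ, Q.eval (k : ℂ) = φ ((k : ℝ≥0) • ∑ i, lam i • A i) := by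
    intro k
    have h1 := hp (fun i => (k : ℝ≥0) * lam i)
    simp only [mul_smul, ← Finset.smul_sum] at h1
    rw [h1]
    conv_rhs => rw [← MvPolynomial.sum_homogeneousComponent p, map_sum]
    simp only [Q, Polynomial.eval_finsetSum, Polynomial.eval_monomial]
    refine Finset.sum_congr rfl fun d _ => ?_
    have h2 := McMullen.eval_smul_homogeneousComponent p x (k : ℂ) d
    simp only [hx] at h2
    simp only [NNReal.coe_mul, NNReal.coe_natCast, Complex.ofReal_mul, Complex.ofReal_natCast]
    rw [h2, mul_comm]
  have hq : ∀ k : ℕ, q.eval (k : ℂ) = φ ((k : ℝ≥0) • ∑ i, lam i • A i) := by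
    intro k
    rw [McMullen.smul_interpolation hφ]
    simp [q, Polynomial.eval_finsetSum, hn]
  have hQq : Q = q := McMullen.poly_eq_of_nat (m := 0) fun k _ => (hQ k).trans (hq k).symm
  have hdeg : q.natDegree ≤ n := by
    refine Polynomial.natDegree_sum_le_of_forall_le _ _ fun j hj => ?_
    refine (Polynomial.natDegree_C_mul_le _ _).trans ?_
    rw [McMullen.node, Lagrange.natDegree_basis Nat.cast_injective.injOn hj, Finset.card_range,
      Nat.add_sub_cancel]
  have hcoeff : ∀ d, n < d →
      MvPolynomial.eval x (MvPolynomial.homogeneousComponent d p) = 0 := by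
    intro d hd
    by_cases hdp : d < p.totalDegree + 1
    · have h1 : Q.coeff d = 0 := by
        rw [hQq]
        exact Polynomial.coeff_eq_zero_of_natDegree_lt (hdeg.trans_lt hd)
      simpa [Q, Polynomial.coeff_monomial, hdp] using h1
    · rw [MvPolynomial.homogeneousComponent_eq_zero d p (by omega), map_zero]
  rw [hp lam, map_sum]
  conv_lhs => rw [← MvPolynomial.sum_homogeneousComponent p, map_sum]
  rcases le_total n p.totalDegree with h | h
  · refine (Finset.sum_subset (Finset.range_mono (by omega)) fun d _ hd => ?_).symm
    exact hcoeff d (by simpa using hd)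
  · refine Finset.sum_subset (Finset.range_mono (by omega)) fun d _ hd => ?_
    rw [MvPolynomial.homogeneousComponent_eq_zero d p (by simpa using hd), map_zero]
end

section
/- Every φ ∈ Val(V) admits a unique decomposition φ = φ_0 + φ_1 + ⋯ + φ_n, where each φ_i is a translation invariant continuous valuation homogeneous of degree i; that is, Val(V) = ⊕_{i=0}^n Val_i(V) (McMullen's decomposition). -/
/-!
The component `ψ i K` is the coefficient of `cⁱ` in `c ↦ φ (c K)`, so the theorem amounts to this
function being a polynomial of degree at most `n = dim V` on `[0, ∞)`. Homogeneity and uniqueness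
then follow by comparing coefficients.

Polynomiality is shown first for polytopes. A polytope with vertices `z₀, …, z_q` is, up to a
translation, the linear image `T = {∑ tᵢ xᵢ : 1 ≥ t₀ ≥ ⋯ ≥ t_{q-1} ≥ 0}` of a simplex, where
`xᵢ = z_{i+1} - zᵢ`. No linear independence is needed, because `A ↦ φ (C + f A)` is a valuation
for every linear `f` and every body `C` (`onSet_push`). Cutting `(m + 1) T` successively by
`t_k = 1` yields pieces which are translates of `m T_k + S_k`, with `T_k` and `S_k` the simplices
on the first `k` and on the last `q - k` or `q - k - 1` of the `xᵢ`. Thus the difference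
`φ (C + (m + 1) T) - φ (C + m T)` is a combination of terms of the same shape with fewer vectors
(`chain_recursion`), and by induction `m ↦ φ (C + m T)` has a vanishing iterated difference, i.e.
is a polynomial on `ℕ`.

The degree is at most `n` since `φ (m K) = O((m + 1) ^ n)`: `φ` is bounded on small bodies by
continuity and translation invariance, and slicing `m K` by a grid produces `O((m + 1) ^ n)` small
pieces (`exists_growth_bound`). Rescaling extends the polynomial formula to rational factors, and
continuity to all real factors `c ≥ 0`.

Polytopes are dense (`exists_chainBody_near`). The statement that `φ (c K)` equals its Lagrange
interpolation from the nodes `0, …, n` is closed in `K`, so it holds for all convex bodies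
(`eq_interpolation`). In particular each component is a linear combination of the valuations
`K ↦ φ (j K)`, hence itself lies in `Val(V)`.
-/

open scoped NNReal Pointwise
open Metric MeasureTheory

namespace McMullen

/-! ### Valuations on sets and push-forwards -/

section Push

variable {V : Type*} [NormedAddCommGroup V] [NormedSpace ℝ V]

open Classical in
/-- The value of `φ` on a set, with junk value `0` on sets that are not convex bodies. -/
noncomputable def onSet (φ : ConvexBody V → ℂ) (S : Set V) : ℂ :=
  if h : Convex ℝ S ∧ IsCompact S ∧ S.Nonempty then φ ⟨S, h.1, h.2.1, h.2.2⟩ else 0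

theorem onSet_of (φ : ConvexBody V → ℂ) {S : Set V} (h₁ : Convex ℝ S) (h₂ : IsCompact S)
    (h₃ : S.Nonempty) : onSet φ S = φ ⟨S, h₁, h₂, h₃⟩ := by
  rw [onSet, dif_pos ⟨h₁, h₂, h₃⟩]

theorem onSet_coe (φ : ConvexBody V → ℂ) (K : ConvexBody V) : onSet φ (K : Set V) = φ K :=
  onSet_of φ K.convex K.isCompact K.nonempty

theorem onSet_translate {φ : ConvexBody V → ℂ} (hφ : IsTranslationInvariant φ)
    (K : ConvexBody V) (x : V) : onSet φ ((K : Set V) + {x}) = φ K := by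
  rw [← hφ K x, ← onSet_coe φ]
  rfl

variable {E : Type*} [AddCommGroup E] [Module ℝ E] [TopologicalSpace E]
  [IsTopologicalAddGroup E] [ContinuousSMul ℝ E] [T2Space E]

/-- If a union of two compact convex sets is convex, any segment joining them meets the
intersection. -/
theorem exists_combo_mem_inter {A B : Set E} (hA : IsCompact A) (hB : IsCompact B)
    (hAB : Convex ℝ (A ∪ B)) {a b : E} (ha : a ∈ A) (hb : b ∈ B) :
    ∃ s t : ℝ, 0 ≤ s ∧ 0 ≤ t ∧ s + t = 1 ∧ s • a + t • b ∈ A ∩ B := by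
  have hseg : segment ℝ a b ⊆ A ∪ B := hAB.segment_subset (Or.inl ha) (Or.inr hb)
  have hpre : IsPreconnected (segment ℝ a b) := (convex_segment a b).isPreconnected
  obtain ⟨z, hz, hzA, hzB⟩ := isPreconnected_closed_iff.1 hpre A B hA.isClosed hB.isClosed hseg
    ⟨a, left_mem_segment ℝ a b, ha⟩ ⟨b, right_mem_segment ℝ a b, hb⟩
  obtain ⟨s, t, hs, ht, hst, rfl⟩ := hz
  exact ⟨s, t, hs, ht, hst, hzA, hzB⟩

/-- For any continuous linear `f` (injective or not) and any body `C`, the functional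
`A ↦ φ (C + f A)` is again a valuation: when `A ∪ B` is convex, a coincidence
`c + f a = c' + f b` is also attained over a point of `[a, b] ∩ A ∩ B`. -/
theorem onSet_push {φ : ConvexBody V → ℂ} (hφ : IsValuation φ) (f : E →L[ℝ] V)
    (C : ConvexBody V) {A B : Set E} (hA : Convex ℝ A) (hB : Convex ℝ B) (hA' : IsCompact A)
    (hB' : IsCompact B) (hA0 : A.Nonempty) (hB0 : B.Nonempty) (hAB : Convex ℝ (A ∪ B)) :
    onSet φ (C + f '' (A ∪ B)) =
      onSet φ (C + f '' A) + onSet φ (C + f '' B) - onSet φ (C + f '' (A ∩ B)) := by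
  have key : ∀ S : Set E, Convex ℝ S → IsCompact S → S.Nonempty →
      Convex ℝ ((C : Set V) + f '' S) ∧ IsCompact ((C : Set V) + f '' S) ∧
        ((C : Set V) + f '' S).Nonempty := fun S h1 h2 h3 =>
    ⟨C.convex.add (h1.linear_image f.toLinearMap), C.isCompact.add (h2.image f.continuous),
      C.nonempty.add (h3.image _)⟩
  have hI0 : (A ∩ B).Nonempty := by
    obtain ⟨a, ha⟩ := hA0
    obtain ⟨b, hb⟩ := hB0
    obtain ⟨s, t, -, -, -, h⟩ := exists_combo_mem_inter hA' hB' hAB ha hb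
    exact ⟨_, h⟩
  obtain ⟨a1, a2, a3⟩ := key A hA hA' hA0
  obtain ⟨b1, b2, b3⟩ := key B hB hB' hB0
  obtain ⟨c1, c2, c3⟩ := key (A ∪ B) hAB (hA'.union hB') (hA0.mono Set.subset_union_left)
  obtain ⟨d1, d2, d3⟩ := key (A ∩ B) (hA.inter hB) (hA'.inter hB') hI0
  rw [onSet_of φ a1 a2 a3, onSet_of φ b1 b2 b3, onSet_of φ c1 c2 c3, onSet_of φ d1 d2 d3]
  apply hφ
  · simp only [ConvexBody.coe_mk]
    rw [Set.image_union, Set.add_union]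
  · simp only [ConvexBody.coe_mk]
    apply Set.Subset.antisymm
    · exact Set.subset_inter (Set.add_subset_add_left (Set.image_mono Set.inter_subset_left))
        (Set.add_subset_add_left (Set.image_mono Set.inter_subset_right))
    · rintro _ ⟨⟨c, hc, _, ⟨a, ha, rfl⟩, rfl⟩, ⟨c', hc', _, ⟨b, hb, rfl⟩, he⟩⟩
      obtain ⟨s, t, hs, ht, hst, h⟩ := exists_combo_mem_inter hA' hB' hAB ha hb
      refine ⟨s • c + t • c', C.convex hc hc' hs ht hst, _, ⟨_, h, rfl⟩, ?_⟩
      simp only [map_add, map_smul] at he ⊢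
      calc s • c + t • c' + (s • f a + t • f b) = s • (c + f a) + t • (c' + f b) := by module
        _ = (s + t) • (c + f a) := by rw [he]; module
        _ = c + f a := by rw [hst, one_smul]

/-- Dilation preserves the valuation property, including for the factor `0`. -/
theorem isValuation_smul {φ : ConvexBody V → ℂ} (hφ : IsValuation φ) (c : ℝ≥0) :
    IsValuation (fun K => φ (c • K)) := by
  intro A B C D hC hD
  have h := onSet_push hφ (c.1 • ContinuousLinearMap.id ℝ V) 0 A.convex B.convex A.isCompact
    B.isCompact A.nonempty B.nonempty (hC ▸ C.convex)
  rw [← hC, ← hD] at h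
  have e : ∀ K : ConvexBody V, onSet φ ((0 : ConvexBody V) +
      (c.1 • ContinuousLinearMap.id ℝ V) '' (K : Set V)) = φ (c • K) := by
    intro K
    rw [← onSet_coe φ (c • K)]
    congr 1
    rw [ConvexBody.coe_zero, zero_add]
    rfl
  simpa only [e] using h

theorem isTranslationInvariant_smul {φ : ConvexBody V → ℂ} (hφ : IsTranslationInvariant φ)
    (c : ℝ≥0) : IsTranslationInvariant (fun K => φ (c • K)) := by
  intro K x
  have : c • ConvexBody.singletonBody x = ConvexBody.singletonBody (c • x) :=
    ConvexBody.ext (by simp [ConvexBody.singletonBody])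
  simp only [smul_add, this]
  exact hφ _ _

end Push

/-! ### Functions on `ℕ` with a vanishing iterated difference -/

section Diff

open Polynomial fwdDiff

/-- Some iterated forward difference of `f` vanishes; equivalently `f` is polynomial. -/
def DiffNilpotent (f : ℕ → ℂ) : Prop := ∃ d : ℕ, (fwdDiff 1)^[d] f = 0

theorem iter_fwdDiff_zero (d : ℕ) : (fwdDiff (1 : ℕ))^[d] (0 : ℕ → ℂ) = 0 :=
  Function.iterate_fixed (by ext; simp [fwdDiff]) d

theorem DiffNilpotent.add {f g : ℕ → ℂ} (hf : DiffNilpotent f) (hg : DiffNilpotent g) :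
    DiffNilpotent (f + g) := by
  obtain ⟨d, hd⟩ := hf
  obtain ⟨e, he⟩ := hg
  refine ⟨d + e, ?_⟩
  rw [fwdDiff_iter_add, add_comm d e, Function.iterate_add_apply, hd, iter_fwdDiff_zero,
    add_comm e d, Function.iterate_add_apply, he, iter_fwdDiff_zero, add_zero]

theorem DiffNilpotent.neg {f : ℕ → ℂ} (hf : DiffNilpotent f) : DiffNilpotent (-f) := by
  obtain ⟨d, hd⟩ := hf
  refine ⟨d, ?_⟩
  rw [← neg_one_smul ℂ f, fwdDiff_iter_const_smul, hd, smul_zero]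

theorem DiffNilpotent.sum {ι : Type*} (s : Finset ι) (f : ι → ℕ → ℂ)
    (h : ∀ i ∈ s, DiffNilpotent (f i)) : DiffNilpotent (∑ i ∈ s, f i) := by
  classical
  induction s using Finset.induction_on with
  | empty => exact ⟨0, by simp⟩
  | insert a s ha ih =>
    rw [Finset.sum_insert ha]
    exact (h a (by simp)).add (ih fun i hi => h i (by simp [hi]))

theorem DiffNilpotent.of_diff {f : ℕ → ℂ} (h : DiffNilpotent (fwdDiff 1 f)) :
    DiffNilpotent f := by
  obtain ⟨d, hd⟩ := h
  exact ⟨d + 1, by rwa [Function.iterate_succ_apply]⟩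

/-- Newton's forward difference formula. -/
theorem DiffNilpotent.exists_poly {f : ℕ → ℂ} (h : DiffNilpotent f) :
    ∃ p : ℂ[X], ∀ m : ℕ, f m = p.eval (m : ℂ) := by
  obtain ⟨d, hd⟩ := h
  refine ⟨∑ k ∈ Finset.range d,
    C ((k.factorial : ℂ)⁻¹ * (fwdDiff 1)^[k] f 0) * descPochhammer ℂ k, fun m => ?_⟩
  have hz : ∀ k, d ≤ k → (fwdDiff 1)^[k] f 0 = 0 := by
    intro k hk
    obtain ⟨e, rfl⟩ := Nat.exists_eq_add_of_le hk
    rw [add_comm, Function.iterate_add_apply, hd, iter_fwdDiff_zero]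
    rfl
  have h1 := shift_eq_sum_fwdDiff_iter (1 : ℕ) f m 0
  simp only [smul_eq_mul, mul_one, zero_add] at h1
  -- both sums may be extended to a common range, the additional terms being zero
  have e1 : f m = ∑ k ∈ Finset.range (d + (m + 1)), (m.choose k) • (fwdDiff 1)^[k] f 0 := by
    rw [h1]
    apply Finset.sum_subset (by intro k; simp; omega)
    intro k _ hk
    rw [Nat.choose_eq_zero_of_lt (by simp at hk; omega), zero_smul]
  rw [e1, eval_finsetSum]
  symm
  rw [Finset.sum_subset (s₂ := Finset.range (d + (m + 1))) (by intro k; simp; omega)]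
  · refine Finset.sum_congr rfl fun k _ => ?_
    rw [eval_mul, eval_C, descPochhammer_eval_eq_descFactorial,
      Nat.descFactorial_eq_factorial_mul_choose]
    have : (k.factorial : ℂ) ≠ 0 := by exact_mod_cast k.factorial_ne_zero
    push_cast
    field_simp
    simp [mul_comm]
  · intro k _ hk
    rw [hz k (by simpa using hk)]
    simp

end Diff

/-! ### Chain simplices -/

section Chain

/-- Antitone real sequences with values in `[0, r]`: an infinite-dimensional model of the
simplex `r ≥ t₀ ≥ t₁ ≥ ⋯ ≥ 0`. -/
def chain (r : ℝ) : Set (ℕ → ℝ) := {t | Antitone t ∧ ∀ i, t i ∈ Set.Icc 0 r}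

/-- The part of `chain (m + 1)` cut out by `tᵢ ≥ 1` for `i < j` and `tᵢ ≤ 1` for `k ≤ i < q`. -/
def piece (q : ℕ) (m : ℝ) (k j : ℕ) : Set (ℕ → ℝ) :=
  {t | t ∈ chain (m + 1) ∧ (∀ i < j, 1 ≤ t i) ∧ ∀ i, k ≤ i → i < q → t i ≤ 1}

theorem convex_chain (r : ℝ) : Convex ℝ (chain r) := by
  rintro t ⟨ht, ht'⟩ u ⟨hu, hu'⟩ a b ha hb hab
  refine ⟨fun i j hij => ?_, fun i => ?_⟩
  · have := ht hij
    have := hu hij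
    simp only [Pi.add_apply, Pi.smul_apply, smul_eq_mul]
    gcongr
  · exact convex_Icc (𝕜 := ℝ) 0 r (ht' i) (hu' i) ha hb hab

theorem isCompact_chain (r : ℝ) : IsCompact (chain r) := by
  have h1 : IsCompact (Set.univ.pi fun _ : ℕ => Set.Icc (0 : ℝ) r) :=
    isCompact_univ_pi fun _ => isCompact_Icc
  refine h1.of_isClosed_subset ?_ fun t ht i _ => ht.2 i
  have : chain r = (⋂ (i : ℕ) (j : ℕ) (_ : i ≤ j), {t : ℕ → ℝ | t j ≤ t i}) ∩
      ⋂ i : ℕ, {t : ℕ → ℝ | t i ∈ Set.Icc 0 r} := by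
    ext t
    simp only [chain, Antitone, Set.mem_ofPred_eq, Set.mem_inter_iff, Set.mem_iInter]
  rw [this]
  refine IsClosed.inter ?_ (isClosed_iInter fun i => isClosed_Icc.preimage (continuous_apply i))
  exact isClosed_iInter fun i => isClosed_iInter fun j => isClosed_iInter fun _ =>
    isClosed_le (continuous_apply j) (continuous_apply i)

theorem chain_nonempty {r : ℝ} (hr : 0 ≤ r) : (chain r).Nonempty :=
  ⟨fun _ => 0, antitone_const, fun _ => ⟨le_rfl, hr⟩⟩

theorem convex_piece (q : ℕ) (m : ℝ) (k j : ℕ) : Convex ℝ (piece q m k j) := by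
  rintro t ⟨ht, ht1, ht2⟩ u ⟨hu, hu1, hu2⟩ a b ha hb hab
  refine ⟨convex_chain _ ht hu ha hb hab, fun i hi => ?_, fun i hi hi' => ?_⟩
  · exact convex_Ici (𝕜 := ℝ) (1 : ℝ) (ht1 i hi) (hu1 i hi) ha hb hab
  · exact convex_Iic (𝕜 := ℝ) (1 : ℝ) (ht2 i hi hi') (hu2 i hi hi') ha hb hab

theorem isCompact_piece (q : ℕ) (m : ℝ) (k j : ℕ) : IsCompact (piece q m k j) := by
  have : piece q m k j = chain (m + 1) ∩ ((⋂ (i : ℕ) (_ : i < j), {t : ℕ → ℝ | 1 ≤ t i}) ∩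
      ⋂ (i : ℕ) (_ : k ≤ i) (_ : i < q), {t : ℕ → ℝ | t i ≤ 1}) := by
    ext t
    simp only [piece, Set.mem_ofPred_eq, Set.mem_inter_iff, Set.mem_iInter]
  rw [this]
  refine (isCompact_chain _).inter_right (IsClosed.inter ?_ ?_)
  · exact isClosed_iInter fun i => isClosed_iInter fun _ =>
      isClosed_le continuous_const (continuous_apply i)
  · exact isClosed_iInter fun i => isClosed_iInter fun _ => isClosed_iInter fun _ =>
      isClosed_le (continuous_apply i) continuous_const

theorem piece_nonempty (q : ℕ) {m : ℝ} (hm : 0 ≤ m) (k j : ℕ) : (piece q m k j).Nonempty :=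
  ⟨fun _ => 1, ⟨antitone_const, fun _ => ⟨zero_le_one, by linarith⟩⟩, fun _ _ => le_rfl,
    fun _ _ _ => le_rfl⟩

/-- Cutting `piece q m q k` by the hyperplane `t_k = 1`. -/
theorem piece_union {q k : ℕ} (m : ℝ) :
    piece q m q (k + 1) ∪ piece q m k k = piece q m q k := by
  ext t
  constructor
  · rintro (⟨h1, h2, h3⟩ | ⟨h1, h2, h3⟩)
    · exact ⟨h1, fun i hi => h2 i (by omega), h3⟩
    · exact ⟨h1, h2, fun i hi hi' => by omega⟩
  · rintro ⟨h1, h2, h3⟩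
    rcases le_total 1 (t k) with h | h
    · exact Or.inl ⟨h1, fun i hi => h.trans (h1.1 (by omega)), h3⟩
    · exact Or.inr ⟨h1, h2, fun i hi _ => (h1.1 hi).trans h⟩

theorem piece_inter {q k : ℕ} (m : ℝ) :
    piece q m q (k + 1) ∩ piece q m k k = piece q m k (k + 1) := by
  ext t
  constructor
  · rintro ⟨⟨h1, h2, h3⟩, ⟨h4, h5, h6⟩⟩
    exact ⟨h1, h2, h6⟩
  · rintro ⟨h1, h2, h3⟩
    exact ⟨⟨h1, h2, fun i hi hi' => by omega⟩, ⟨h1, fun i hi => h2 i (by omega), h3⟩⟩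

variable {V : Type*} [NormedAddCommGroup V] [NormedSpace ℝ V]

/-- The linear map `t ↦ ∑_{p ≤ i < q} tᵢ xᵢ`. -/
noncomputable def lin (x : ℕ → V) (p q : ℕ) : (ℕ → ℝ) →L[ℝ] V :=
  ∑ i ∈ Finset.Ico p q, (ContinuousLinearMap.proj (R := ℝ) (φ := fun _ : ℕ => ℝ) i).smulRight (x i)

theorem lin_apply (x : ℕ → V) (p q : ℕ) (t : ℕ → ℝ) :
    lin x p q t = ∑ i ∈ Finset.Ico p q, t i • x i := by
  simp [lin]

/-- The convex body `{∑_{p ≤ i < q} tᵢ xᵢ : r ≥ t_p ≥ ⋯ ≥ t_{q-1} ≥ 0}`. -/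
noncomputable def chainBody (x : ℕ → V) (p q : ℕ) (r : ℝ≥0) : ConvexBody V :=
  ⟨lin x p q '' chain r, (convex_chain _).linear_image (lin x p q).toLinearMap,
    (isCompact_chain _).image (lin x p q).continuous, (chain_nonempty r.2).image _⟩

theorem coe_chainBody (x : ℕ → V) (p q : ℕ) (r : ℝ≥0) :
    (chainBody x p q r : Set V) = lin x p q '' chain r := rfl

/-- The image of a piece is, up to translation, the sum of a chain simplex dilated by `m` and a
fixed chain simplex, through the splitting `t = max (t - 1) 0 + min t 1`. -/
theorem image_piece (x : ℕ → V) {q k j : ℕ} (hkj : k ≤ j) (hjq : j ≤ q) (m : ℝ≥0) :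
    lin x 0 q '' piece q m k j =
      (chainBody x 0 k m : Set V) + chainBody x j q 1 + {∑ i ∈ Finset.range j, x i} := by
  have split : ∀ g : ℕ → V, ∑ i ∈ Finset.Ico 0 q, g i =
      ∑ i ∈ Finset.range j, g i + ∑ i ∈ Finset.Ico j q, g i := fun g => by
    rw [Finset.range_eq_Ico, Finset.sum_Ico_consecutive _ (Nat.zero_le _) hjq]
  have split' : ∀ g : ℕ → V, (∀ i, k ≤ i → i < q → g i = 0) → ∑ i ∈ Finset.Ico 0 q, g i =
      ∑ i ∈ Finset.Ico 0 k, g i := fun g hg => by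
    rw [← Finset.sum_Ico_consecutive g (Nat.zero_le k) (hkj.trans hjq),
      Finset.sum_eq_zero (s := Finset.Ico k q) (fun i hi => ?_), add_zero]
    rw [Finset.mem_Ico] at hi
    exact hg i hi.1 hi.2
  apply Set.Subset.antisymm
  · rintro _ ⟨t, ⟨⟨h1, h2⟩, h3, h4⟩, rfl⟩
    refine ⟨_, ⟨_, ⟨fun i => max (t i - 1) 0, ⟨fun a b hab => ?_, fun i => ⟨le_max_right _ _, ?_⟩⟩,
      rfl⟩, _, ⟨fun i => min (t i) 1, ⟨fun a b hab => ?_, fun i => ⟨?_, ?_⟩⟩, rfl⟩, rfl⟩, _, rfl, ?_⟩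
    · have := h1 hab
      exact max_le_max (by linarith) le_rfl
    · have := (h2 i).2
      exact max_le (by linarith) m.2
    · exact min_le_min (h1 hab) le_rfl
    · exact le_min (h2 i).1 zero_le_one
    · simp
    · simp only [lin_apply]
      rw [← split' (fun i => max (t i - 1) 0 • x i)
        (fun i hi hi' => by simp [h4 i hi hi'])]
      have hs : ∑ i ∈ Finset.range j, x i = ∑ i ∈ Finset.range j, min (t i) 1 • x i :=
        Finset.sum_congr rfl fun i hi => by
          rw [min_eq_right (h3 i (by simpa using hi)), one_smul]
      rw [hs, add_assoc, add_comm (∑ i ∈ Finset.Ico j q, _), ← split (fun i => min (t i) 1 • x i),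
        ← Finset.sum_add_distrib]
      refine Finset.sum_congr rfl fun i _ => ?_
      rw [← add_smul]
      congr 1
      rcases le_total (t i) 1 with h | h
      · rw [max_eq_right (by linarith), min_eq_left h, zero_add]
      · rw [max_eq_left (by linarith), min_eq_right h, sub_add_cancel]
  · rintro _ ⟨_, ⟨_, ⟨u, ⟨hu, hu'⟩, rfl⟩, _, ⟨v, ⟨hv, hv'⟩, rfl⟩, rfl⟩, _, rfl, rfl⟩
    have hv'' : ∀ i, v i ≤ 1 := fun i => by simpa using (hv' i).2
    refine ⟨fun i => (if i < k then u i else 0) + (if i < j then 1 else v i),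
      ⟨⟨fun a b hab => ?_, fun i => ?_⟩, fun i hi => ?_, fun i hi hi' => ?_⟩, ?_⟩
    · apply add_le_add
      · split_ifs with h h'
        · exact hu hab
        · omega
        · exact (hu' _).1
        · exact le_rfl
      · split_ifs with h h'
        · exact le_rfl
        · omega
        · exact hv'' _
        · exact hv hab
    · have := hu' i
      have h3 := hv' i
      have h4 := hv'' i
      have h5 := m.2
      simp only [Set.mem_Icc] at this h3 ⊢
      split_ifs <;> constructor <;> linarith
    · have := (hu' i).1
      simp only [hi, if_true]
      split_ifs <;> linarith
    · have := hv'' i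
      simp only [not_lt.2 hi, if_false, zero_add]
      split_ifs <;> linarith
    · simp only [lin_apply, add_smul, Finset.sum_add_distrib]
      rw [split' _ (fun i hi hi' => by simp [not_lt.2 hi]), split, add_assoc]
      congr 1
      · exact Finset.sum_congr rfl fun i hi => by simp [(Finset.mem_Ico.1 hi).2]
      · rw [add_comm]
        congr 1
        · exact Finset.sum_congr rfl fun i hi => by simp [not_lt.2 (Finset.mem_Ico.1 hi).1]
        · exact Finset.sum_congr rfl fun i hi => by simp [Finset.mem_range.1 hi]

variable {φ : ConvexBody V → ℂ}

theorem onSet_add_image_piece (hT : IsTranslationInvariant φ) (C : ConvexBody V) (x : ℕ → V)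
    {q k j : ℕ} (hkj : k ≤ j) (hjq : j ≤ q) (m : ℝ≥0) :
    onSet φ (C + lin x 0 q '' piece q m k j) = φ (C + chainBody x j q 1 + chainBody x 0 k m) := by
  rw [image_piece x hkj hjq, ← onSet_translate hT _ (∑ i ∈ Finset.range j, x i)]
  congr 1
  simp only [ConvexBody.coe_add]
  abel

/-- The recursion behind polynomiality: passing from `m` to `m + 1` changes `φ (C + m T)` only by
terms in which the dilated simplex has smaller dimension. -/
theorem chain_recursion (hφ : IsValuation φ) (hT : IsTranslationInvariant φ) (C : ConvexBody V)
    (x : ℕ → V) (q : ℕ) (m : ℝ≥0) :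
    φ (C + chainBody x 0 q (m + 1)) = φ (C + chainBody x 0 q m) +
      ∑ k ∈ Finset.range q, (φ (C + chainBody x k q 1 + chainBody x 0 k m) -
        φ (C + chainBody x (k + 1) q 1 + chainBody x 0 k m)) := by
  have step : ∀ k < q, onSet φ (C + lin x 0 q '' piece q m q k) =
      onSet φ (C + lin x 0 q '' piece q m q (k + 1)) +
      (φ (C + chainBody x k q 1 + chainBody x 0 k m) -
        φ (C + chainBody x (k + 1) q 1 + chainBody x 0 k m)) := by
    intro k hk
    rw [← onSet_add_image_piece hT C x le_rfl hk.le,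
      ← onSet_add_image_piece hT C x (Nat.le_succ k) hk, ← piece_union (k := k), ← piece_inter,
      onSet_push hφ (lin x 0 q) C (convex_piece _ _ _ _) (convex_piece _ _ _ _)
        (isCompact_piece _ _ _ _) (isCompact_piece _ _ _ _) (piece_nonempty _ m.coe_nonneg _ _)
        (piece_nonempty _ m.coe_nonneg _ _) (by rw [piece_union]; exact convex_piece _ _ _ _)]
    ring
  have tele : ∀ k ≤ q, onSet φ (C + lin x 0 q '' piece q m q 0) =
      onSet φ (C + lin x 0 q '' piece q m q k) +
      ∑ k ∈ Finset.range k, (φ (C + chainBody x k q 1 + chainBody x 0 k m) -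
        φ (C + chainBody x (k + 1) q 1 + chainBody x 0 k m)) := by
    intro k
    induction k with
    | zero => simp
    | succ k ih =>
      intro hk
      rw [ih (by omega), step k (by omega), Finset.sum_range_succ]
      ring
  have h0 : onSet φ (C + lin x 0 q '' piece q m q 0) = φ (C + chainBody x 0 q (m + 1)) := by
    rw [← onSet_coe φ]
    congr 3
    ext t
    constructor
    · exact fun h => by simpa using h.1
    · exact fun h => ⟨by simpa using h, fun i hi => by omega, fun i hi hi' => by omega⟩
  have hq : onSet φ (C + lin x 0 q '' piece q m q q) = φ (C + chainBody x 0 q m) := by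
    rw [onSet_add_image_piece hT C x le_rfl le_rfl]
    have : chainBody x q q 1 = 0 := by
      apply ConvexBody.ext
      rw [coe_chainBody, ConvexBody.coe_zero]
      ext y
      simp only [Set.mem_image, lin_apply, Finset.Ico_self, Finset.sum_empty, Set.mem_zero]
      exact ⟨fun ⟨_, _, h⟩ => h.symm, fun h => ⟨_, (chain_nonempty (1 : ℝ≥0).2).some_mem, h.symm⟩⟩
    rw [this, add_zero]
  rw [← h0, tele q le_rfl, hq]

theorem diffNilpotent_chainBody (hφ : IsValuation φ) (hT : IsTranslationInvariant φ) (x : ℕ → V)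
    (q : ℕ) : ∀ C : ConvexBody V, DiffNilpotent fun m : ℕ => φ (C + chainBody x 0 q m) := by
  induction q using Nat.strong_induction_on with
  | _ q ih =>
    intro C
    apply DiffNilpotent.of_diff
    have : fwdDiff 1 (fun m : ℕ => φ (C + chainBody x 0 q m)) = ∑ k ∈ Finset.range q,
        ((fun m : ℕ => φ (C + chainBody x k q 1 + chainBody x 0 k m)) +
          -(fun m : ℕ => φ (C + chainBody x (k + 1) q 1 + chainBody x 0 k m))) := by
      ext m
      simp only [fwdDiff, Nat.cast_add, Nat.cast_one, chain_recursion hφ hT, Finset.sum_apply,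
        Pi.add_apply, Pi.neg_apply, add_sub_cancel_left]
      simp only [sub_eq_add_neg]
    rw [this]
    exact DiffNilpotent.sum _ _ fun k hk => (ih k (by simpa using hk) _).add
      (ih k (by simpa using hk) _).neg

theorem chainBody_eq_smul (x : ℕ → V) (p q : ℕ) (r : ℝ≥0) :
    chainBody x p q r = r • chainBody x p q 1 := by
  apply ConvexBody.ext
  rw [ConvexBody.coe_smul', coe_chainBody, coe_chainBody]
  ext y
  constructor
  · rintro ⟨t, ⟨ht, ht'⟩, rfl⟩
    rcases eq_or_ne r 0 with rfl | hr
    · have : t = 0 := by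
        ext i
        simpa using ht' i
      subst this
      exact ⟨_, ⟨0, ⟨antitone_const, fun i => by simp⟩, rfl⟩, by simp⟩
    · have hr' : 0 < (r : ℝ) := by positivity
      refine ⟨_, ⟨(r : ℝ)⁻¹ • t, ⟨fun a b hab => ?_, fun i => ?_⟩, rfl⟩, ?_⟩
      · have := ht hab
        simp only [Pi.smul_apply, smul_eq_mul]
        gcongr
      · have := ht' i
        simp only [Pi.smul_apply, smul_eq_mul, NNReal.coe_one, Set.mem_Icc]
        refine ⟨mul_nonneg (by positivity) this.1, ?_⟩
        rw [inv_mul_le_iff₀ hr', mul_one]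
        exact this.2
      · dsimp only
        rw [map_smul, smul_inv_smul₀ hr'.ne']
  · rintro ⟨_, ⟨t, ⟨ht, ht'⟩, rfl⟩, rfl⟩
    refine ⟨(r : ℝ) • t, ⟨fun a b hab => ?_, fun i => ?_⟩, ?_⟩
    · have := ht hab
      simp only [Pi.smul_apply, smul_eq_mul]
      gcongr
    · have := ht' i
      simp only [Pi.smul_apply, smul_eq_mul, NNReal.coe_one, Set.mem_Icc] at this ⊢
      exact ⟨mul_nonneg r.2 this.1, mul_le_of_le_one_right r.2 this.2⟩
    · rw [map_smul]

/-- `m ↦ φ (m r T)` is polynomial on `ℕ` for a chain simplex `T` and a fixed factor `r`. -/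
theorem exists_poly_chainBody (hφ : IsValuation φ) (hT : IsTranslationInvariant φ) (x : ℕ → V)
    (q : ℕ) (r : ℝ≥0) : ∃ p : Polynomial ℂ, ∀ m : ℕ,
      φ (((m : ℝ≥0) * r) • chainBody x 0 q 1) = p.eval (m : ℂ) := by
  obtain ⟨p, hp⟩ := (diffNilpotent_chainBody (isValuation_smul hφ r)
    (isTranslationInvariant_smul hT r) x q 0).exists_poly
  refine ⟨p, fun m => ?_⟩
  rw [← hp m, zero_add, chainBody_eq_smul x 0 q m, smul_smul, mul_comm]

end Chain

/-! ### Growth of `φ (m K)` -/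

section Growth

variable {V : Type*} [NormedAddCommGroup V] [NormedSpace ℝ V] {φ : ConvexBody V → ℂ}

/-- Continuity at `{0}` and translation invariance bound `φ` on all sufficiently small bodies. -/
theorem exists_small_bound (hT : IsTranslationInvariant φ) (hC : Continuous φ) :
    ∃ δ > 0, ∃ B : ℝ, 0 ≤ B ∧ ∀ K : ConvexBody V, (∃ y, ∀ z ∈ K, dist z y ≤ δ) → ‖φ K‖ ≤ B := by
  obtain ⟨δ, hδ, h⟩ := Metric.continuous_iff.1 hC 0 1 one_pos
  refine ⟨δ / 2, by positivity, ‖φ 0‖ + 1, by positivity, ?_⟩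
  rintro K ⟨y, hy⟩
  rw [← hT K (-y)]
  have hd : dist (K + ConvexBody.singletonBody (-y)) 0 < δ := by
    refine lt_of_le_of_lt ?_ (half_lt_self hδ)
    rw [← ConvexBody.hausdorffDist_coe]
    have hmem : ∀ w ∈ ((K + ConvexBody.singletonBody (-y) : ConvexBody V) : Set V),
        dist w 0 ≤ δ / 2 := by
      rintro _ ⟨z, hz, _, rfl, rfl⟩
      simpa [dist_eq_norm, ← sub_eq_add_neg] using hy z hz
    refine hausdorffDist_le_of_mem_dist (by positivity) (fun w hw => ⟨0, rfl, hmem w hw⟩) ?_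
    intro w hw
    obtain ⟨v, hv⟩ := (K + ConvexBody.singletonBody (-y)).nonempty
    refine ⟨v, hv, ?_⟩
    obtain rfl : w = 0 := hw
    rw [dist_comm]
    exact hmem v hv
  have h1 := h _ hd
  rw [dist_eq_norm] at h1
  have := norm_le_norm_add_norm_sub' (φ (K + ConvexBody.singletonBody (-y))) (φ 0)
  linarith

/-- Slicing a body of `l`-width at most `(N + 1) η` by `N` parallel hyperplanes: the slabs and
the sections between them number at most `2 N + 1`. The hereditary property `P` records the
bounds already available in the other directions. -/
theorem norm_le_slab (hφ : IsValuation φ) (l : V →L[ℝ] ℝ) (P : ConvexBody V → Prop)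
    (hP : ∀ K L : ConvexBody V, (K : Set V) ⊆ L → P L → P K) {η B : ℝ} (hB0 : 0 ≤ B)
    (hB : ∀ K, P K → (∃ c, ∀ z ∈ K, l z ∈ Set.Icc c (c + η)) → ‖φ K‖ ≤ B) (N : ℕ) :
    ∀ (K : ConvexBody V) (c : ℝ), P K → (∀ z ∈ K, l z ∈ Set.Icc c (c + (N + 1) * η)) →
      ‖φ K‖ ≤ (2 * N + 1) * B := by
  induction N with
  | zero =>
    intro K c hK h
    simpa using hB K hK ⟨c, by simpa using h⟩
  | succ N ih =>
    intro K c hK h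
    push_cast at h ⊢
    have hsub : ∀ z ∈ K, c + η ≤ l z → l z ∈ Set.Icc (c + η) (c + η + (N + 1) * η) :=
      fun z hz hz' => ⟨hz', by have := (h z hz).2; linarith⟩
    have hsub' : ∀ z ∈ K, l z ≤ c + η → l z ∈ Set.Icc c (c + η) :=
      fun z hz hz' => ⟨(h z hz).1, hz'⟩
    have hlow : IsClosed {z | l z ≤ c + η} := isClosed_le l.continuous continuous_const
    have hupp : IsClosed {z | c + η ≤ l z} := isClosed_le continuous_const l.continuous
    have clow : Convex ℝ {z | l z ≤ c + η} := convex_halfSpace_le l.toLinearMap.isLinear _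
    have cupp : Convex ℝ {z | c + η ≤ l z} := convex_halfSpace_ge l.toLinearMap.isLinear _
    have hNB : 0 ≤ N * B := by positivity
    rcases Set.eq_empty_or_nonempty ((K : Set V) ∩ {z | l z ≤ c + η}) with he | h1
    · have := ih K (c + η) hK fun z hz => hsub z hz <| by
        by_contra hlt
        exact Set.eq_empty_iff_forall_notMem.1 he z ⟨hz, (not_le.1 hlt).le⟩
      linarith
    rcases Set.eq_empty_or_nonempty ((K : Set V) ∩ {z | c + η ≤ l z}) with he | h2
    · have := hB K hK ⟨c, fun z hz => hsub' z hz <| by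
        by_contra hlt
        exact Set.eq_empty_iff_forall_notMem.1 he z ⟨hz, (not_le.1 hlt).le⟩⟩
      linarith
    have hun : (K : Set V) = ((K : Set V) ∩ {z | l z ≤ c + η}) ∪ (K ∩ {z | c + η ≤ l z}) := by
      rw [← Set.inter_union_distrib_left, Set.inter_eq_left.2]
      exact fun z _ => le_total (l z) (c + η)
    have h3 : (((K : Set V) ∩ {z | l z ≤ c + η}) ∩ (K ∩ {z | c + η ≤ l z})).Nonempty := by
      obtain ⟨a, ha⟩ := h1
      obtain ⟨b, hb⟩ := h2
      obtain ⟨s, t, -, -, -, h⟩ := exists_combo_mem_inter (K.isCompact.inter_right hlow)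
        (K.isCompact.inter_right hupp) (hun ▸ K.convex) ha hb
      exact ⟨_, h⟩
    let K₁ : ConvexBody V := ⟨_, K.convex.inter clow, K.isCompact.inter_right hlow, h1⟩
    let K₂ : ConvexBody V := ⟨_, K.convex.inter cupp, K.isCompact.inter_right hupp, h2⟩
    let K₃ : ConvexBody V := ⟨_, (K.convex.inter clow).inter (K.convex.inter cupp),
      (K.isCompact.inter_right hlow).inter (K.isCompact.inter_right hupp), h3⟩
    have hval : φ K = φ K₁ + φ K₂ - φ K₃ := hφ K₁ K₂ K K₃ hun rfl
    have b1 : ‖φ K₁‖ ≤ B := hB K₁ (hP _ K (fun z hz => hz.1) hK)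
      ⟨c, fun z hz => hsub' z hz.1 hz.2⟩
    have b2 : ‖φ K₂‖ ≤ (2 * N + 1) * B := ih K₂ (c + η) (hP _ K (fun z hz => hz.1) hK)
      fun z hz => hsub z hz.1 hz.2
    have b3 : ‖φ K₃‖ ≤ B := hB K₃ (hP _ K (fun z hz => hz.1.1) hK)
      ⟨c, fun z hz => hsub' z hz.1.1 hz.1.2⟩
    rw [hval]
    have := norm_sub_le (φ K₁ + φ K₂) (φ K₃)
    have := norm_add_le (φ K₁) (φ K₂)
    linarith

/-- Slicing successively in the directions `l i`, `i ∈ s`. -/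
theorem norm_le_box (hφ : IsValuation φ) {ι : Type*} [DecidableEq ι] (l : ι → V →L[ℝ] ℝ)
    {η B : ℝ} (hB0 : 0 ≤ B)
    (hB : ∀ K : ConvexBody V, (∃ c : ι → ℝ, ∀ i, ∀ z ∈ K, l i z ∈ Set.Icc (c i) (c i + η)) →
      ‖φ K‖ ≤ B) (N : ℕ) (s : Finset ι) :
    ∀ (K : ConvexBody V) (c : ι → ℝ),
      (∀ i ∈ s, ∀ z ∈ K, l i z ∈ Set.Icc (c i) (c i + (N + 1) * η)) →
      (∀ i ∉ s, ∀ z ∈ K, l i z ∈ Set.Icc (c i) (c i + η)) →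
      ‖φ K‖ ≤ (2 * N + 1) ^ s.card * B := by
  induction s using Finset.induction_on with
  | empty =>
    intro K c _ h
    simpa using hB K ⟨c, fun i => h i (by simp)⟩
  | insert a s ha ih =>
    intro K c h1 h2
    rw [Finset.card_insert_of_notMem ha, pow_succ', mul_assoc]
    refine norm_le_slab hφ (l a)
      (fun K => ∃ c : ι → ℝ, (∀ i ∈ s, ∀ z ∈ K, l i z ∈ Set.Icc (c i) (c i + (N + 1) * η)) ∧
        ∀ i ∉ insert a s, ∀ z ∈ K, l i z ∈ Set.Icc (c i) (c i + η))
      ?_ (by positivity) ?_ N K (c a) ⟨c, fun i hi => h1 i (by simp [hi]), h2⟩ (h1 a (by simp))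
    · rintro K L hKL ⟨c, h1, h2⟩
      exact ⟨c, fun i hi z hz => h1 i hi z (hKL hz), fun i hi z hz => h2 i hi z (hKL hz)⟩
    · rintro K ⟨c, h1, h2⟩ ⟨c', h'⟩
      refine ih K (Function.update c a c') (fun i hi => ?_) (fun i hi => ?_)
      · have : i ≠ a := fun h => ha (h ▸ hi)
        simpa [this] using h1 i hi
      · by_cases hia : i = a
        · subst hia
          simpa using h'
        · simpa [hia] using h2 i (by simp [hia, hi])

/-- A grid of boxes of fixed size covers `m K` with `O((m + 1) ^ n)` cells, and `φ` is bounded on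
bodies contained in a cell. -/
theorem exists_growth_bound [FiniteDimensional ℝ V] (hφ : MemVal φ) (K : ConvexBody V) :
    ∃ A : ℝ, 0 ≤ A ∧ ∀ m : ℕ,
      ‖φ ((m : ℝ≥0) • K)‖ ≤ A * ((m : ℝ) + 1) ^ Module.finrank ℝ V := by
  obtain ⟨hφ, hT, hC⟩ := hφ
  obtain ⟨δ, hδ, B, hB0, hB⟩ := exists_small_bound hT hC
  let b := Module.finBasis ℝ V
  let l : Fin (Module.finrank ℝ V) → V →L[ℝ] ℝ := fun i => (b.coord i).toContinuousLinearMap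
  have hl : ∀ i z, l i z = b.repr z i := fun i z => rfl
  have hS0 : 0 ≤ ∑ i, ‖b i‖ := Finset.sum_nonneg fun i _ => norm_nonneg _
  obtain ⟨η, hη, hηS⟩ : ∃ η : ℝ, 0 < η ∧ η * ∑ i, ‖b i‖ ≤ δ := by
    refine ⟨δ / (∑ i, ‖b i‖ + 1), by positivity, ?_⟩
    rw [div_mul_eq_mul_div, div_le_iff₀ (by positivity)]
    nlinarith
  have hsmall : ∀ K : ConvexBody V, (∃ c : Fin (Module.finrank ℝ V) → ℝ,
      ∀ i, ∀ z ∈ K, l i z ∈ Set.Icc (c i) (c i + η)) → ‖φ K‖ ≤ B := by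
    rintro K ⟨c, hc⟩
    obtain ⟨y, hy⟩ := K.nonempty
    refine hB K ⟨y, fun z hz => ?_⟩
    rw [dist_eq_norm, ← b.sum_repr (z - y)]
    refine (norm_sum_le _ _).trans (le_trans ?_ hηS)
    rw [Finset.mul_sum]
    refine Finset.sum_le_sum fun i _ => ?_
    rw [norm_smul]
    gcongr
    have h1 := hc i z hz
    have h2 := hc i y hy
    rw [hl, Set.mem_Icc] at h1 h2
    rw [map_sub, Finsupp.sub_apply, Real.norm_eq_abs, abs_le]
    constructor <;> linarith
  obtain ⟨R, hR, hKR⟩ := K.isBounded.exists_pos_norm_le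
  have hlR : ∀ i, ∀ z ∈ K, |l i z| ≤ (∑ j, ‖l j‖) * R := by
    intro i z hz
    refine ((l i).le_opNorm z).trans ?_
    have h1 : ‖l i‖ ≤ ∑ j, ‖l j‖ :=
      Finset.single_le_sum (f := fun j => ‖l j‖) (fun j _ => norm_nonneg _) (Finset.mem_univ i)
    have h2 := hKR z hz
    gcongr
  set R' := (∑ j, ‖l j‖) * R with hR'
  have hR'0 : 0 ≤ R' := mul_nonneg (Finset.sum_nonneg fun i _ => norm_nonneg _) hR.le
  obtain ⟨M, hM⟩ := exists_nat_ge (2 * R' / η)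
  rw [div_le_iff₀ hη] at hM
  refine ⟨(2 * M + 1) ^ Module.finrank ℝ V * B, by positivity, fun m => ?_⟩
  have := norm_le_box hφ l hB0 hsmall (m * M) Finset.univ ((m : ℝ≥0) • K)
    (fun _ => -(m * R')) ?_ (fun i hi => absurd (Finset.mem_univ i) hi)
  · refine this.trans ?_
    rw [Finset.card_univ, Fintype.card_fin, mul_right_comm, ← mul_pow]
    gcongr
    push_cast
    have : (0 : ℝ) ≤ M := by positivity
    have : (0 : ℝ) ≤ m := by positivity
    nlinarith
  · rintro i - _ ⟨z, hz, rfl⟩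
    have h1 := abs_le.1 (hlR i z hz)
    have h2 : l i ((m : ℝ) • z) = m * l i z := by rw [map_smul, smul_eq_mul]
    have hm : (0 : ℝ) ≤ m := by positivity
    change l i ((m : ℝ) • z) ∈ _
    rw [h2, Set.mem_Icc]
    push_cast
    constructor
    · nlinarith
    · nlinarith [mul_le_mul_of_nonneg_left hM hm]

open Filter Topology in
theorem natDegree_le_of_growth_s1 {p : Polynomial ℂ} {A : ℝ} {n : ℕ} (hA : 0 ≤ A)
    (h : ∀ m : ℕ, ‖p.eval (m : ℂ)‖ ≤ A * ((m : ℝ) + 1) ^ n) : p.natDegree ≤ n := by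
  by_contra! hlt
  have hratio : ∀ i < p.natDegree,
      Tendsto (fun m : ℕ => (m : ℝ) ^ i / (m : ℝ) ^ p.natDegree) atTop (𝓝 0) := fun i hi =>
    (tendsto_pow_div_pow_atTop_zero hi).comp tendsto_natCast_atTop_atTop
  have h1 : Tendsto (fun m : ℕ => p.eval (m : ℂ) / (m : ℂ) ^ p.natDegree) atTop
      (𝓝 (∑ i ∈ Finset.range (p.natDegree + 1), if i = p.natDegree then p.leadingCoeff else 0)) := by
    simp only [Polynomial.eval_eq_sum_range, Finset.sum_div]
    refine tendsto_finsetSum _ fun i hi => ?_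
    split_ifs with hd
    · subst hd
      refine tendsto_const_nhds.congr' ?_
      filter_upwards [eventually_gt_atTop 0] with m hm
      have : (m : ℂ) ≠ 0 := by exact_mod_cast hm.ne'
      rw [mul_div_assoc, div_self (pow_ne_zero _ this), mul_one, Polynomial.leadingCoeff]
    · have hi' : i < p.natDegree := by
        have := Finset.mem_range.1 hi
        omega
      have := ((Complex.continuous_ofReal.tendsto 0).comp (hratio i hi')).const_mul (p.coeff i)
      simpa [mul_div_assoc, Function.comp_def] using this
  have h2 : Tendsto (fun m : ℕ => p.eval (m : ℂ) / (m : ℂ) ^ p.natDegree) atTop (𝓝 0) := by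
    have h3 := (hratio n hlt).const_mul (A * 2 ^ n)
    rw [mul_zero] at h3
    refine squeeze_zero_norm' ?_ h3
    filter_upwards [eventually_gt_atTop 0] with m hm
    rw [norm_div, norm_pow, Complex.norm_natCast, ← mul_div_assoc]
    gcongr
    refine (h m).trans ?_
    rw [mul_assoc, ← mul_pow]
    gcongr
    have : (1 : ℝ) ≤ m := by exact_mod_cast hm
    linarith
  have h3 := tendsto_nhds_unique h1 h2
  rw [Finset.sum_ite_eq' _ _ _, if_pos (by simp), Polynomial.leadingCoeff_eq_zero] at h3
  simp [h3] at hlt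

end Growth

/-! ### Continuity of dilations and density of polytopes -/

section Density

variable {V : Type*} [NormedAddCommGroup V] [NormedSpace ℝ V]

theorem continuous_smul_body (c : ℝ≥0) : Continuous fun K : ConvexBody V => c • K := by
  rw [Metric.continuous_iff]
  intro L ε hε
  have hc : (0 : ℝ) ≤ c := c.2
  refine ⟨ε / (c + 1), by positivity, fun K hK => ?_⟩
  have key : ∀ x y : V, dist x y < ε / (c + 1) →
      dist ((c : ℝ) • x) ((c : ℝ) • y) ≤ c * (ε / (c + 1)) := by
    intro x y hxy
    rw [dist_smul₀, Real.norm_of_nonneg hc]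
    gcongr
  refine lt_of_le_of_lt (b := c * (ε / (c + 1))) ?_ ?_
  · rw [← ConvexBody.hausdorffDist_coe] at hK ⊢
    refine hausdorffDist_le_of_mem_dist (by positivity) ?_ ?_
    · rintro _ ⟨x, hx, rfl⟩
      obtain ⟨y, hy, hxy⟩ :=
        exists_dist_lt_of_hausdorffDist_lt hx hK ConvexBody.hausdorffEDist_ne_top
      exact ⟨_, ⟨y, hy, rfl⟩, key x y hxy⟩
    · rintro _ ⟨y, hy, rfl⟩
      obtain ⟨x, hx, hxy⟩ :=
        exists_dist_lt_of_hausdorffDist_lt' hy hK ConvexBody.hausdorffEDist_ne_top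
      exact ⟨_, ⟨x, hx, rfl⟩, key y x (by rwa [dist_comm])⟩
  · rw [mul_div_assoc', div_lt_iff₀ (by positivity)]
    nlinarith

theorem continuous_smul_scalar (K : ConvexBody V) : Continuous fun c : ℝ≥0 => c • K := by
  obtain ⟨R, hR, hKR⟩ := K.isBounded.exists_pos_norm_le
  refine (LipschitzWith.of_dist_le_mul (K := ⟨R, hR.le⟩) fun c d => ?_).continuous
  have key : ∀ c d : ℝ≥0, ∀ x ∈ K, dist ((c : ℝ) • x) ((d : ℝ) • x) ≤ R * dist c d := by
    intro c d x hx
    rw [dist_eq_norm, ← sub_smul, norm_smul, mul_comm, NNReal.dist_eq, Real.norm_eq_abs]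
    have := hKR x hx
    gcongr
  rw [← ConvexBody.hausdorffDist_coe]
  refine hausdorffDist_le_of_mem_dist (by positivity) ?_ ?_
  · rintro _ ⟨x, hx, rfl⟩
    exact ⟨_, ⟨x, hx, rfl⟩, key c d x hx⟩
  · rintro _ ⟨x, hx, rfl⟩
    refine ⟨_, ⟨x, hx, rfl⟩, ?_⟩
    rw [dist_comm c d]
    exact key d c x hx

/-- By Abel summation, points of the translated chain simplex on the increments of `z` are convex
combinations of `z₀, …, z_q`. -/
theorem chain_subset_of_convex {S : Set V} (hS : Convex ℝ S) (z : ℕ → V) (hz : ∀ i, z i ∈ S)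
    (q : ℕ) {t : ℕ → ℝ} (ht : t ∈ chain 1) :
    z 0 + lin (fun i => z (i + 1) - z i) 0 q t ∈ S := by
  let t' : ℕ → ℝ := fun i => if i = 0 then 1 else t (i - 1)
  have ht1 : ∀ i, t' (i + 1) = t i := fun i => by simp [t']
  have hanti : ∀ i, t' (i + 1) ≤ t' i := by
    intro i
    rcases i with _ | i
    · simpa [t'] using (ht.2 0).2
    · rw [ht1, ht1]
      exact ht.1 (Nat.le_succ i)
  have hnn : ∀ i, 0 ≤ t' i := by
    intro i
    rcases i with _ | i
    · simp [t']
    · rw [ht1]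
      exact (ht.2 i).1
  let w : ℕ → ℝ := fun i => if i = q then t' q else t' i - t' (i + 1)
  have hw : ∀ i < q, w i = t' i - t' (i + 1) := fun i hi => by simp [w, hi.ne]
  have hwq : w q = t' q := by simp [w]
  have hrec : ∀ q, z 0 + lin (fun i => z (i + 1) - z i) 0 q t =
      ∑ i ∈ Finset.range q, (t' i - t' (i + 1)) • z i + t' q • z q := by
    intro q
    rw [lin_apply, ← Finset.range_eq_Ico]
    induction q with
    | zero => simp [t']
    | succ q ih =>
      rw [Finset.sum_range_succ, ← add_assoc, ih, Finset.sum_range_succ, ht1]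
      module
  have hsum : z 0 + lin (fun i => z (i + 1) - z i) 0 q t =
      ∑ i ∈ Finset.range (q + 1), w i • z i := by
    rw [hrec q, Finset.sum_range_succ, hwq]
    congr 1
    exact Finset.sum_congr rfl fun i hi => by rw [hw i (Finset.mem_range.1 hi)]
  rw [hsum]
  refine hS.sum_mem (fun i hi => ?_) ?_ fun i _ => hz i
  · simp only [w]
    split_ifs
    · exact hnn q
    · exact sub_nonneg.2 (hanti i)
  · rw [Finset.sum_range_succ, hwq,
      Finset.sum_congr rfl fun i hi => hw i (Finset.mem_range.1 hi), Finset.sum_range_sub']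
    simp [t']

/-- Translated chain simplices, i.e. polytopes, are dense among convex bodies. -/
theorem exists_chainBody_near (K : ConvexBody V) {ε : ℝ} (hε : 0 < ε) :
    ∃ (x : ℕ → V) (q : ℕ) (y : V),
      dist K (chainBody x 0 q 1 + ConvexBody.singletonBody y) < ε := by
  obtain ⟨F, hFK, hF, hcov⟩ :=
    Metric.finite_approx_of_totallyBounded K.isCompact.totallyBounded (ε / 2) (half_pos hε)
  have hFne : F.Nonempty := by
    obtain ⟨k, hk⟩ := K.nonempty
    obtain ⟨y, hy, -⟩ := Set.mem_iUnion₂.1 (hcov hk)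
    exact ⟨y, hy⟩
  obtain ⟨z, hz⟩ := hF.countable.exists_eq_range hFne
  have hzK : ∀ i, z i ∈ (K : Set V) := fun i => hFK (hz ▸ Set.mem_range_self i)
  -- a bound on the indices needed to enumerate the finite net
  obtain ⟨q, hq⟩ : ∃ q : ℕ, ∀ y ∈ F, ∃ i ≤ q, z i = y := by
    have h : ∀ y : V, ∃ i, y ∈ F → z i = y := by
      intro y
      by_cases hy : y ∈ F
      · obtain ⟨i, hi⟩ := (hz ▸ hy : y ∈ Set.range z)
        exact ⟨i, fun _ => hi⟩
      · exact ⟨0, fun h => absurd h hy⟩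
    choose g hg using h
    obtain ⟨q, hq⟩ := (hF.image g).bddAbove
    exact ⟨q, fun y hy => ⟨g y, hq ⟨y, hy, rfl⟩, hg y hy⟩⟩
  refine ⟨fun i => z (i + 1) - z i, q, z 0, lt_of_le_of_lt ?_ (half_lt_self hε)⟩
  rw [← ConvexBody.hausdorffDist_coe]
  refine hausdorffDist_le_of_mem_dist (by positivity) ?_ ?_
  · intro k hk
    obtain ⟨y, hy, hky⟩ := Set.mem_iUnion₂.1 (hcov hk)
    obtain ⟨i, hi, rfl⟩ := hq y hy
    refine ⟨z i, ⟨_, ⟨fun j => if j < i then 1 else 0, ⟨fun a b hab => ?_, fun j => ?_⟩, rfl⟩,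
      z 0, rfl, ?_⟩, hky.le⟩
    · dsimp only
      split_ifs <;> first | omega | norm_num
    · dsimp only
      split_ifs <;> simp
    · simp only [lin_apply, ite_smul, one_smul, zero_smul]
      rw [← Finset.sum_filter, show (Finset.Ico 0 q).filter (· < i) = Finset.range i by
        ext j; simp; omega, Finset.sum_range_sub, sub_add_cancel]
  · rintro _ ⟨_, ⟨t, ht, rfl⟩, _, rfl, rfl⟩
    refine ⟨_, ?_, (dist_self _).trans_le (by positivity)⟩
    dsimp only
    rw [add_comm]
    exact chain_subset_of_convex K.convex z hzK q (by simpa using ht)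

end Density

/-! ### Polynomiality of `c ↦ φ (c K)` -/

section Poly

open Polynomial Filter Topology

variable {V : Type*} [NormedAddCommGroup V] [NormedSpace ℝ V] [FiniteDimensional ℝ V]
  {φ : ConvexBody V → ℂ}

theorem exists_poly_real_chainBody (hφ : MemVal φ) (x : ℕ → V) (q : ℕ) :
    ∃ p : ℂ[X], p.natDegree ≤ Module.finrank ℝ V ∧
      ∀ c : ℝ≥0, φ (c • chainBody x 0 q 1) = p.eval ((c : ℝ) : ℂ) := by
  obtain ⟨p, hp⟩ := exists_poly_chainBody hφ.1 hφ.2.1 x q 1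
  simp only [mul_one] at hp
  refine ⟨p, ?_, ?_⟩
  · obtain ⟨A, hA, h⟩ := exists_growth_bound hφ (chainBody x 0 q 1)
    exact natDegree_le_of_growth_s1 hA fun m => by rw [← hp m]; exact h m
  -- rational dilations: the polynomial for the body scaled by `1 / N` is `p (X / N)`
  have hrat : ∀ m N : ℕ, 0 < N → φ (((m : ℝ≥0) / N) • chainBody x 0 q 1) =
      p.eval ((m : ℂ) / N) := by
    intro m N hN
    have hN' : (N : ℝ≥0) ≠ 0 := by exact_mod_cast hN.ne'
    have hN'' : (N : ℂ) ≠ 0 := by exact_mod_cast hN.ne'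
    obtain ⟨r, hr⟩ := exists_poly_chainBody hφ.1 hφ.2.1 x q (N : ℝ≥0)⁻¹
    have hrp : r.comp (C (N : ℂ) * X) = p := by
      refine eq_of_infinite_eval_eq _ _ ?_
      refine (Set.infinite_range_of_injective (Nat.cast_injective (R := ℂ))).mono ?_
      rintro _ ⟨k, rfl⟩
      have h1 := hr (N * k)
      rw [Nat.cast_mul, mul_right_comm, mul_inv_cancel₀ hN', one_mul, hp k] at h1
      simp [h1]
    rw [div_eq_mul_inv, hr m, ← hrp, eval_comp]
    simp only [eval_mul, eval_C, eval_X]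
    rw [mul_div_cancel₀ _ hN'']
  intro c
  have hlim : Tendsto (fun N : ℕ => (⌊(c : ℝ) * N⌋₊ : ℝ≥0) / N) atTop (𝓝 c) := by
    rw [← NNReal.tendsto_coe]
    push_cast
    exact (tendsto_nat_floor_mul_div_atTop c.2).comp tendsto_natCast_atTop_atTop
  have h1 := ((hφ.2.2.comp (continuous_smul_scalar (chainBody x 0 q 1))).tendsto c).comp hlim
  have h2 : Continuous fun c : ℝ≥0 => p.eval ((c : ℝ) : ℂ) :=
    p.continuous.comp (Complex.continuous_ofReal.comp NNReal.continuous_coe)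
  refine tendsto_nhds_unique h1 (((h2.tendsto c).comp hlim).congr' ?_)
  filter_upwards [eventually_gt_atTop 0] with N hN
  simp only [Function.comp_apply]
  rw [hrat _ N hN]
  push_cast
  rfl

/-- Lagrange basis polynomials at the nodes `0, …, n`. -/
noncomputable def lag (n j : ℕ) : ℂ[X] :=
  Lagrange.basis (Finset.range (n + 1)) (fun i : ℕ => (i : ℂ)) j

/-- `c ↦ φ (c K)` agrees with its interpolation polynomial at `0, …, n`. For polytopes this is
polynomiality; both sides are continuous in `K`. -/
theorem eq_interpolation (hφ : MemVal φ) (c : ℝ≥0) (K : ConvexBody V) :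
    φ (c • K) = ∑ j ∈ Finset.range (Module.finrank ℝ V + 1),
      φ ((j : ℝ≥0) • K) * (lag (Module.finrank ℝ V) j).eval ((c : ℝ) : ℂ) := by
  have hclosed : IsClosed {K : ConvexBody V | φ (c • K) =
      ∑ j ∈ Finset.range (Module.finrank ℝ V + 1),
        φ ((j : ℝ≥0) • K) * (lag (Module.finrank ℝ V) j).eval ((c : ℝ) : ℂ)} :=
    isClosed_eq (hφ.2.2.comp (continuous_smul_body c)) (continuous_finsetSum _ fun j _ =>
      (hφ.2.2.comp (continuous_smul_body _)).mul continuous_const)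
  refine hclosed.closure_subset (Metric.mem_closure_iff.2 fun ε hε => ?_)
  obtain ⟨x, q, y, hd⟩ := exists_chainBody_near K hε
  refine ⟨_, ?_, hd⟩
  obtain ⟨p, hdeg, hp⟩ := exists_poly_real_chainBody hφ x q
  have htr : ∀ d : ℝ≥0, φ (d • (chainBody x 0 q 1 + ConvexBody.singletonBody y)) =
      p.eval ((d : ℝ) : ℂ) := fun d => by
    rw [← hp d]
    exact isTranslationInvariant_smul hφ.2.1 d _ _
  change _ = _
  simp only [htr]
  have hinj : Set.InjOn (fun i : ℕ => (i : ℂ)) (Finset.range (Module.finrank ℝ V + 1)) :=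
    Nat.cast_injective.injOn
  have hdeg' : p.degree < (Finset.range (Module.finrank ℝ V + 1)).card := by
    rw [Finset.card_range]
    exact (degree_le_of_natDegree_le hdeg).trans_lt (by exact_mod_cast Nat.lt_succ_self _)
  conv_lhs => rw [Lagrange.eq_interpolate hinj hdeg']
  rw [Lagrange.interpolate_apply, eval_finsetSum]
  refine Finset.sum_congr rfl fun j _ => ?_
  rw [eval_mul, eval_C]
  simp [lag]

/-- The degree `i` component: the coefficient of `cⁱ` in `φ (c K)`, read off from the Lagrange
interpolation polynomial at the nodes `0, …, n`. -/
noncomputable def component (φ : ConvexBody V → ℂ) (i : ℕ) (K : ConvexBody V) : ℂ :=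
  ∑ j ∈ Finset.range (Module.finrank ℝ V + 1),
    φ ((j : ℝ≥0) • K) * (lag (Module.finrank ℝ V) j).coeff i

theorem memVal_component (hφ : MemVal φ) (i : ℕ) : MemVal (component φ i) := by
  refine ⟨fun A B C D hC hD => ?_, fun K x => ?_, ?_⟩
  · simp only [component]
    rw [← Finset.sum_add_distrib, ← Finset.sum_sub_distrib]
    refine Finset.sum_congr rfl fun j _ => ?_
    have h := isValuation_smul hφ.1 (j : ℝ≥0) A B C D hC hD
    dsimp only at h
    rw [h]
    ring
  · refine Finset.sum_congr rfl fun j _ => ?_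
    have h := isTranslationInvariant_smul hφ.2.1 (j : ℝ≥0) K x
    dsimp only at h
    rw [h]
  · exact continuous_finsetSum _ fun j _ =>
      (hφ.2.2.comp (continuous_smul_body _)).mul continuous_const

theorem expand_component (hφ : MemVal φ) (c : ℝ≥0) (K : ConvexBody V) :
    φ (c • K) = ∑ i : Fin (Module.finrank ℝ V + 1), ((c : ℝ) : ℂ) ^ (i : ℕ) * component φ i K := by
  rw [eq_interpolation hφ c K, Fin.sum_univ_eq_sum_range
    (fun i => ((c : ℝ) : ℂ) ^ i * component φ i K)]
  simp only [component, Finset.mul_sum]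
  rw [Finset.sum_comm]
  refine Finset.sum_congr rfl fun j hj => ?_
  have hdeg : (lag (Module.finrank ℝ V) j).natDegree < Module.finrank ℝ V + 1 := by
    rw [lag, Lagrange.natDegree_basis Nat.cast_injective.injOn hj, Finset.card_range]
    simp
  rw [eval_eq_sum_range' hdeg, Finset.mul_sum]
  exact Finset.sum_congr rfl fun i _ => by ring

/-- A polynomial function on `[0, ∞)` determines its coefficients. -/
theorem coeff_unique {n : ℕ} {a b : Fin n → ℂ}
    (h : ∀ c : ℝ≥0, ∑ i : Fin n, ((c : ℝ) : ℂ) ^ (i : ℕ) * a i =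
      ∑ i : Fin n, ((c : ℝ) : ℂ) ^ (i : ℕ) * b i) :
    a = b := by
  have hpoly : (∑ i : Fin n, X ^ (i : ℕ) * C (a i)) = ∑ i : Fin n, X ^ (i : ℕ) * C (b i) := by
    refine eq_of_infinite_eval_eq _ _ ?_
    refine (Set.infinite_range_of_injective (Nat.cast_injective (R := ℂ))).mono ?_
    rintro _ ⟨k, rfl⟩
    change _ = _
    have hk := h k
    simp only [NNReal.coe_natCast, Complex.ofReal_natCast] at hk
    simp only [eval_finsetSum, eval_mul, eval_C, eval_pow, eval_X]
    exact hk
  ext i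
  have h1 := congrArg (fun p => coeff p (i : ℕ)) hpoly
  simpa [finsetSum_coeff, coeff_mul_C, coeff_X_pow, Fin.val_inj] using h1

end Poly

end McMullen

/-- **McMullen's decomposition.** Every `φ ∈ Val(V)` admits a unique decomposition
`φ = φ_0 + φ_1 + ⋯ + φ_n` where each `φ_i` is a translation invariant continuous valuation
homogeneous of degree `i`; that is, `Val(V) = ⊕_{i=0}^n Val_i(V)`. -/
theorem mcmullen_decomposition {V : Type*} [NormedAddCommGroup V] [NormedSpace ℝ V]
    [FiniteDimensional ℝ V]
    (φ : ConvexBody V → ℂ) (hφ : MemVal φ) :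
    ∃! ψ : Fin (Module.finrank ℝ V + 1) → (ConvexBody V → ℂ),
      (∀ i, MemVal (ψ i) ∧ IsHomogeneousVal (ψ i) (i : ℕ)) ∧
      ∀ K : ConvexBody V, φ K = ∑ i, ψ i K := by
  refine ⟨fun i => McMullen.component φ i, ⟨fun i => ⟨McMullen.memVal_component hφ i, ?_⟩, ?_⟩, ?_⟩
  · intro c K
    -- compare coefficients in the expansions of `φ (d (c K)) = φ ((d c) K)`
    have h := McMullen.coeff_unique
      (a := fun i : Fin (Module.finrank ℝ V + 1) => McMullen.component φ i (c • K))
      (b := fun i => ((c : ℝ) : ℂ) ^ (i : ℕ) * McMullen.component φ i K) fun d => by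
        rw [← McMullen.expand_component hφ d (c • K), smul_smul, McMullen.expand_component hφ]
        refine Finset.sum_congr rfl fun i _ => ?_
        push_cast
        ring
    exact congrFun h i
  · intro K
    simpa using McMullen.expand_component hφ 1 K
  · rintro ψ ⟨hψ, hsum⟩
    funext i K
    have h := McMullen.coeff_unique (a := fun i => ψ i K)
      (b := fun i => McMullen.component φ i K) fun d => by
        rw [← McMullen.expand_component hφ d K, hsum]
        exact Finset.sum_congr rfl fun i _ => ((hψ i).2 d K).symm
    exact congrFun h i
end

section
/- The space Val_0(V) is one-dimensional, spanned by the Euler characteristic χ (the valuation constantly equal to 1), and the space Val_n(V) is one-dimensional, spanned by a Lebesgue measure: every translation invariant continuous valuation on K(V) homogeneous of degree n = dim V equals c · vol for some constant c ∈ ℂ, where vol is a fixed Lebesgue measure on V (Hadwiger's theorem on top-degree valuations). -/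
/-!
Top degree. Let `φ` be a translation invariant continuous valuation, homogeneous of degree
`n = dim V`, and fix the grid of unit cells of a basis of `V`. By inclusion-exclusion, `φ (t • K)`
is the sum over grid cells of the value of `φ` on the part of `t • K` in the half-open cell
(`extVal_eq_sum_cellVal`). Cells inside `t • K` all contribute the same constant `c` by translation
invariance; cells missing `t • K` contribute `0`; every other contribution is bounded, since a
continuous functional is bounded on the convex bodies in a fixed compact set
(`exists_bound_of_continuous`, by Blaschke selection). Multiplied by `t ^ (-n)` and by the volume
of a cell, the sum becomes the integral of a step function of `x`, constant on the cells of mesh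
`1 / t` (`integral_cellVal`), and homogeneity says that its value is `φ K` times the volume of a
unit cell, for every `t`. As `t → ∞` the step functions converge to `c` on the interior of `K` and
to `0` off `K`, and the frontier of a convex set is null; dominated convergence yields
`φ K * vol (cell) = c * vol K` (`tendsto_integral_cellVal`). No separate proof that `φ` vanishes
on lower-dimensional bodies is needed.

Degree zero. Homogeneity with factor `0` gives `φ K = φ (0 • K) = φ {0}`.

Volume is continuous by dominated convergence again: indicators of `K j → K` converge off the
frontier of `K`, where interior points of `K` are handled by separation
(`ConvexBody.mem_of_ball_subset`).
-/

open scoped NNReal Pointwise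
open Metric MeasureTheory

open Filter Topology

/-! ### Continuity of volume -/

section Body

variable {V : Type*} [NormedAddCommGroup V] [NormedSpace ℝ V]

/-- Convexity is what makes interior points stable: a point deep inside `K` cannot be separated
by a functional from a body `L` that is Hausdorff-close to `K`. -/
lemma ConvexBody.mem_of_ball_subset {K L : ConvexBody V} {x : V} {r : ℝ} (hr : 0 < r)
    (hx : ball x r ⊆ (K : Set V)) (hd : dist K L < r / 2) : x ∈ (L : Set V) := by
  by_contra hxL
  obtain ⟨f, u, hfu, hux⟩ := geometric_hahn_banach_closed_point L.convex L.isClosed hxL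
  have hf : 0 < ‖f‖ := by
    rw [norm_pos_iff]
    rintro rfl
    obtain ⟨y, hy⟩ := L.nonempty
    have := hfu y hy
    simp at this hux
    linarith
  obtain ⟨v, hv, hfv⟩ : ∃ v : V, ‖v‖ < 1 ∧ ‖f‖ / 2 < f v := by
    obtain ⟨v, hv, hfv⟩ := f.exists_lt_apply_of_lt_opNorm (half_lt_self hf)
    rcases le_total 0 (f v) with h | h
    · exact ⟨v, hv, by rwa [Real.norm_of_nonneg h] at hfv⟩
    · exact ⟨-v, by simpa using hv, by rw [Real.norm_of_nonpos h] at hfv; simpa using hfv⟩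
  have hmem : x + r • v ∈ (K : Set V) := hx (by
    rw [mem_ball, dist_eq_norm, add_sub_cancel_left, norm_smul, Real.norm_of_nonneg hr.le]
    nlinarith)
  obtain ⟨y, hy, hxy⟩ := exists_dist_lt_of_hausdorffDist_lt hmem
    (by rwa [ConvexBody.hausdorffDist_coe]) ConvexBody.hausdorffEDist_ne_top
  have h1 : f (x + r • v) - f y ≤ ‖f‖ * (r / 2) := by
    rw [← map_sub]
    refine (le_abs_self _).trans ((f.le_opNorm _).trans ?_)
    rw [← dist_eq_norm]
    gcongr
  have h2 := hfu y hy
  rw [map_add, map_smul, smul_eq_mul] at h1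
  nlinarith

variable [MeasurableSpace V] [BorelSpace V]

lemma ConvexBody.continuous_measure [FiniteDimensional ℝ V] (μ : Measure V)
    [μ.IsAddHaarMeasure] : Continuous fun K : ConvexBody V => ((μ (K : Set V)).toReal : ℂ) := by
  refine Complex.continuous_ofReal.comp ?_
  rw [continuous_iff_seqContinuous]
  intro u K hu
  have : ProperSpace V := FiniteDimensional.proper ℝ V
  have hint (L : ConvexBody V) :
      (μ (L : Set V)).toReal = ∫ x, (L : Set V).indicator (fun _ => (1 : ℝ)) x ∂μ := by
    rw [integral_indicator_const _ L.isClosed.measurableSet]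
    simp [Measure.real]
  simp only [Function.comp_def, hint]
  rw [tendsto_iff_dist_tendsto_zero] at hu
  have hT : IsCompact (cthickening 1 (K : Set V)) := K.isCompact.cthickening
  refine tendsto_integral_filter_of_dominated_convergence
    ((cthickening 1 (K : Set V)).indicator fun _ => (1 : ℝ)) ?_ ?_ ?_ ?_
  · exact Eventually.of_forall fun j =>
      (measurable_const.indicator (u j).isClosed.measurableSet).aestronglyMeasurable
  · filter_upwards [hu.eventually (gt_mem_nhds one_pos)] with j hj
    refine Eventually.of_forall fun x => ?_
    by_cases hx : x ∈ (u j : Set V)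
    · obtain ⟨y, hy, hxy⟩ := exists_dist_lt_of_hausdorffDist_lt hx
        (by rwa [ConvexBody.hausdorffDist_coe]) ConvexBody.hausdorffEDist_ne_top
      rw [Set.indicator_of_mem hx, Set.indicator_of_mem
        (mem_cthickening_of_dist_le x y 1 _ hy hxy.le)]
      simp
    · rw [Set.indicator_of_notMem hx, norm_zero]
      exact Set.indicator_nonneg (fun _ _ => zero_le_one) _
  · rw [integrable_indicator_iff hT.isClosed.measurableSet]
    exact integrableOn_const hT.measure_lt_top.ne
  · have hfr : ∀ᵐ x ∂μ, x ∉ frontier (K : Set V) :=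
      measure_eq_zero_iff_ae_notMem.1 (K.convex.addHaar_frontier μ)
    filter_upwards [hfr] with x hx
    refine tendsto_const_nhds.congr' ?_
    by_cases hxK : x ∈ (K : Set V)
    · have hxi : x ∈ interior (K : Set V) := by
        by_contra h
        exact hx ⟨subset_closure hxK, h⟩
      obtain ⟨r, hr, hb⟩ := Metric.isOpen_iff.1 isOpen_interior x hxi
      filter_upwards [hu.eventually (gt_mem_nhds (half_pos hr))] with j hj
      rw [dist_comm] at hj
      rw [Set.indicator_of_mem hxK, Set.indicator_of_mem
        (ConvexBody.mem_of_ball_subset hr (hb.trans interior_subset) hj)]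
    · obtain ⟨r, hr, hb⟩ := Metric.isOpen_iff.1 K.isClosed.isOpen_compl x hxK
      filter_upwards [hu.eventually (gt_mem_nhds hr)] with j hj
      rw [Set.indicator_of_notMem hxK, Set.indicator_of_notMem]
      intro hxu
      obtain ⟨y, hy, hxy⟩ := exists_dist_lt_of_hausdorffDist_lt hxu
        (by rwa [ConvexBody.hausdorffDist_coe]) ConvexBody.hausdorffEDist_ne_top
      exact hb (by rwa [mem_ball, dist_comm]) hy

end Body

/-! ### Blaschke selection -/

section Bound

variable {V : Type*} [NormedAddCommGroup V] [NormedSpace ℝ V]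

lemma convex_of_tendsto {u : ℕ → TopologicalSpace.NonemptyCompacts V}
    {N : TopologicalSpace.NonemptyCompacts V} (hu : Tendsto u atTop (𝓝 N))
    (hc : ∀ j, Convex ℝ (u j : Set V)) : Convex ℝ (N : Set V) := by
  have fin (A B : TopologicalSpace.NonemptyCompacts V) :
      hausdorffEDist (A : Set V) B ≠ ⊤ :=
    hausdorffEDist_ne_top_of_nonempty_of_bounded A.nonempty B.nonempty
      A.isCompact.isBounded B.isCompact.isBounded
  intro x hx y hy a b ha hb hab
  rw [← N.isCompact.isClosed.closure_eq, Metric.mem_closure_iff]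
  intro ε hε
  rw [tendsto_iff_dist_tendsto_zero] at hu
  obtain ⟨j, hj⟩ := (hu.eventually (gt_mem_nhds (half_pos hε))).exists
  rw [Metric.NonemptyCompacts.dist_eq] at hj
  obtain ⟨x', hx', hxx⟩ := exists_dist_lt_of_hausdorffDist_lt' hx hj (fin _ _)
  obtain ⟨y', hy', hyy⟩ := exists_dist_lt_of_hausdorffDist_lt' hy hj (fin _ _)
  obtain ⟨z, hz, hzz⟩ := exists_dist_lt_of_hausdorffDist_lt (hc j hx' hy' ha hb hab) hj (fin _ _)
  refine ⟨z, hz, ?_⟩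
  have h1 : dist (a • x + b • y) (a • x' + b • y') ≤ ε / 2 := by
    refine (dist_add_add_le _ _ _ _).trans ?_
    rw [dist_smul₀, dist_smul₀, Real.norm_of_nonneg ha, Real.norm_of_nonneg hb,
      dist_comm x, dist_comm y]
    calc a * dist x' x + b * dist y' y ≤ a * (ε / 2) + b * (ε / 2) := by gcongr
      _ = ε / 2 := by rw [← add_mul, hab, one_mul]
  have h2 := dist_triangle (a • x + b • y) (a • x' + b • y') z
  linarith

/-- Blaschke's selection theorem in the form needed here: the bodies inside a compact set form a
compact family, so a continuous functional is bounded on them. -/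
lemma exists_bound_of_continuous {φ : ConvexBody V → ℂ} (hφ : Continuous φ) {Q : Set V}
    (hQ : IsCompact Q) : ∃ C : ℝ, 0 ≤ C ∧ ∀ L : ConvexBody V, (L : Set V) ⊆ Q → ‖φ L‖ ≤ C := by
  by_contra! h
  choose L hLQ hL using fun j : ℕ => h j j.cast_nonneg
  let N : ℕ → TopologicalSpace.NonemptyCompacts V := fun j =>
    ⟨⟨L j, (L j).isCompact⟩, (L j).nonempty⟩
  obtain ⟨M, -, s, hs, hlim⟩ :=
    (TopologicalSpace.NonemptyCompacts.isCompact_subsets_of_isCompact hQ).tendsto_subseq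
      (x := N) hLQ
  let M' : ConvexBody V := ⟨M, convex_of_tendsto hlim fun j => (L (s j)).convex, M.isCompact,
    M.nonempty⟩
  have hlim' : Tendsto (fun j => L (s j)) atTop (𝓝 M') := by
    rw [tendsto_iff_dist_tendsto_zero] at hlim ⊢
    exact hlim
  have hb := ((hφ.tendsto M').comp hlim').norm
  refine not_tendsto_nhds_of_tendsto_atTop (tendsto_atTop_mono (fun j => ?_)
    tendsto_natCast_atTop_atTop) _ hb
  exact (Nat.cast_le.2 hs.le_apply).trans (hL (s j)).le

end Bound

/-! ### Extending a valuation to arbitrary sets -/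

section Ext

variable {V : Type*} [NormedAddCommGroup V] [NormedSpace ℝ V]

open Classical in
/-- The extension of `φ` to all subsets of `V`, by `0` on sets that are not convex bodies; in
particular the empty set gets the value `0`. -/
noncomputable def extVal (φ : ConvexBody V → ℂ) (S : Set V) : ℂ :=
  if h : Convex ℝ S ∧ IsCompact S ∧ S.Nonempty then φ ⟨S, h.1, h.2.1, h.2.2⟩ else 0

lemma extVal_coe (φ : ConvexBody V → ℂ) (K : ConvexBody V) : extVal φ K = φ K :=
  dif_pos ⟨K.convex, K.isCompact, K.nonempty⟩

lemma extVal_empty (φ : ConvexBody V → ℂ) : extVal φ ∅ = 0 :=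
  dif_neg fun h => Set.not_nonempty_empty h.2.2

/-- If both parts are nonempty they intersect, since their union is connected; hence the empty
intersection only occurs when one part is empty. -/
lemma extVal_union {φ : ConvexBody V → ℂ} (hφ : IsValuation φ) {A B : Set V}
    (hA : Convex ℝ A) (hA' : IsCompact A) (hB : Convex ℝ B) (hB' : IsCompact B)
    (hAB : Convex ℝ (A ∪ B)) :
    extVal φ (A ∪ B) = extVal φ A + extVal φ B - extVal φ (A ∩ B) := by
  rcases A.eq_empty_or_nonempty with rfl | hAn
  · simp [extVal_empty]
  rcases B.eq_empty_or_nonempty with rfl | hBn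
  · simp [extVal_empty]
  have hI : (A ∩ B).Nonempty := by
    have := isPreconnected_closed_iff.1 hAB.isPreconnected A B hA'.isClosed hB'.isClosed
      subset_rfl (by simpa [Set.inter_eq_right.2 Set.subset_union_left] using hAn)
      (by simpa [Set.inter_eq_right.2 Set.subset_union_right] using hBn)
    exact this.mono Set.inter_subset_right
  let A' : ConvexBody V := ⟨A, hA, hA', hAn⟩
  let B' : ConvexBody V := ⟨B, hB, hB', hBn⟩
  let C' : ConvexBody V := ⟨A ∪ B, hAB, hA'.union hB', hAn.mono Set.subset_union_left⟩
  let D' : ConvexBody V := ⟨A ∩ B, hA.inter hB, hA'.inter hB', hI⟩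
  have := hφ A' B' C' D' rfl rfl
  rwa [← extVal_coe φ A', ← extVal_coe φ B', ← extVal_coe φ C', ← extVal_coe φ D'] at this

lemma extVal_translate {φ : ConvexBody V → ℂ} (hφ : IsTranslationInvariant φ) (S : Set V)
    (v : V) : extVal φ ((fun y => y - v) ⁻¹' S) = extVal φ S := by
  have key (T : Set V) (w : V) (hT : Convex ℝ T ∧ IsCompact T ∧ T.Nonempty) :
      ((⟨T, hT.1, hT.2.1, hT.2.2⟩ + ConvexBody.singletonBody w : ConvexBody V) : Set V)
        = (fun y => y - w) ⁻¹' T := by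
    ext y
    simp [ConvexBody.singletonBody, sub_eq_add_neg]
  by_cases h : Convex ℝ S ∧ IsCompact S ∧ S.Nonempty
  · rw [← key S v h, extVal_coe, hφ, extVal, dif_pos h]
  · have h' : ¬ (Convex ℝ ((fun y => y - v) ⁻¹' S) ∧ IsCompact ((fun y => y - v) ⁻¹' S) ∧
        ((fun y => y - v) ⁻¹' S).Nonempty) := by
      intro hT
      apply h
      have e := key _ (-v) hT
      have e' : (fun y => y - -v) ⁻¹' ((fun y => y - v) ⁻¹' S) = S := by ext y; simp
      rw [e'] at e
      rw [← e]
      exact ⟨ConvexBody.convex _, ConvexBody.isCompact _, ConvexBody.nonempty _⟩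
    rw [extVal, dif_neg h', extVal, dif_neg h]

end Ext

/-! ### Cutting along a lattice of hyperplanes -/

section Cells

variable {V : Type*} [NormedAddCommGroup V] [NormedSpace ℝ V]

/-- The closed slab `{k ≤ f ≤ k + 1}`. -/
def slab (f : V →L[ℝ] ℝ) (k : ℤ) : Set V := {y | (k : ℝ) ≤ f y ∧ f y ≤ k + 1}

/-- The hyperplane `{f = k}` bounding `slab f k` from below. -/
def wall (f : V →L[ℝ] ℝ) (k : ℤ) : Set V := {y | f y = k}

/-- The closed cell `{y | ∀ i, z i ≤ f i y ≤ z i + 1}` of the grid given by the functionals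
`f i`. -/
def cell {j : ℕ} (f : Fin j → V →L[ℝ] ℝ) (z : Fin j → ℤ) : Set V :=
  {y | ∀ i, (z i : ℝ) ≤ f i y ∧ f i y ≤ z i + 1}

/-- The value of `ψ` on the part of `K` in the half-open cell `{y | ∀ i, z i < f i y ≤ z i + 1}`,
computed by inclusion-exclusion over the removed facets `{f i = z i}`. -/
def cellVal (ψ : Set V → ℂ) : {j : ℕ} → (Fin j → V →L[ℝ] ℝ) → (Fin j → ℤ) → Set V → ℂ
  | 0, _, _, K => ψ K
  | _ + 1, f, z, K => cellVal ψ (Fin.tail f) (Fin.tail z) (K ∩ slab (f 0) (z 0)) -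
      cellVal ψ (Fin.tail f) (Fin.tail z) (K ∩ wall (f 0) (z 0))

lemma convex_slab (f : V →L[ℝ] ℝ) (k : ℤ) : Convex ℝ (slab f k) :=
  (convex_halfSpace_ge f.isLinear _).inter (convex_halfSpace_le f.isLinear _)

lemma convex_wall (f : V →L[ℝ] ℝ) (k : ℤ) : Convex ℝ (wall f k) :=
  convex_hyperplane f.isLinear _

lemma isClosed_slab (f : V →L[ℝ] ℝ) (k : ℤ) : IsClosed (slab f k) :=
  (isClosed_le continuous_const f.continuous).inter (isClosed_le f.continuous continuous_const)

lemma isClosed_wall (f : V →L[ℝ] ℝ) (k : ℤ) : IsClosed (wall f k) :=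
  isClosed_eq f.continuous continuous_const

lemma wall_subset_slab (f : V →L[ℝ] ℝ) (k : ℤ) : wall f k ⊆ slab f k := by
  intro y hy
  rw [wall, Set.mem_ofPred_eq] at hy
  constructor <;> linarith

lemma cell_succ {j : ℕ} (f : Fin (j + 1) → V →L[ℝ] ℝ) (z : Fin (j + 1) → ℤ) :
    cell f z = slab (f 0) (z 0) ∩ cell (Fin.tail f) (Fin.tail z) := by
  ext y
  simp [cell, slab, Fin.forall_fin_succ, Fin.tail]

/-- `cellVal ψ f z K` only depends on the part of `K` in the closed cell. -/
lemma cellVal_congr (ψ : Set V → ℂ) {j : ℕ} (f : Fin j → V →L[ℝ] ℝ) (z : Fin j → ℤ)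
    {K K' : Set V} (h : K ∩ cell f z = K' ∩ cell f z) :
    cellVal ψ f z K = cellVal ψ f z K' := by
  induction j generalizing K K' with
  | zero => simpa [cell, cellVal] using congrArg ψ h
  | succ j ih =>
    rw [cell_succ] at h
    rw [cellVal, cellVal]
    congr 1
    · exact ih _ _ (by rw [Set.inter_assoc, h, Set.inter_assoc])
    · refine ih _ _ ?_
      have e (L : Set V) : L ∩ wall (f 0) (z 0) ∩ cell (Fin.tail f) (Fin.tail z) =
          L ∩ (slab (f 0) (z 0) ∩ cell (Fin.tail f) (Fin.tail z)) ∩ wall (f 0) (z 0) := by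
        ext y
        have := @wall_subset_slab _ _ _ (f 0) (z 0) y
        simp only [Set.mem_inter_iff]
        tauto
      rw [e, h, e]

lemma norm_cellVal_le {ψ : Set V → ℂ} {j : ℕ} (f : Fin j → V →L[ℝ] ℝ) (z : Fin j → ℤ)
    {K : Set V} {C : ℝ} (hK : Convex ℝ K) (hK' : IsCompact K)
    (h : ∀ L : Set V, Convex ℝ L → IsCompact L → L ⊆ K ∩ cell f z → ‖ψ L‖ ≤ C) :
    ‖cellVal ψ f z K‖ ≤ 2 ^ j * C := by
  induction j generalizing K with
  | zero => simpa [cellVal] using h K hK hK' (by simp [cell])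
  | succ j ih =>
    rw [cell_succ] at h
    rw [cellVal]
    have h1 := ih (Fin.tail f) (Fin.tail z) (hK.inter (convex_slab (f 0) (z 0)))
      (hK'.inter_right (isClosed_slab (f 0) (z 0)))
      (fun L hL hL' hs => h L hL hL' (hs.trans (by rw [Set.inter_assoc])))
    have h2 := ih (Fin.tail f) (Fin.tail z) (hK.inter (convex_wall (f 0) (z 0)))
      (hK'.inter_right (isClosed_wall (f 0) (z 0)))
      (fun L hL hL' hs => h L hL hL' (hs.trans (by
        rw [Set.inter_assoc]
        gcongr
        exact wall_subset_slab _ _)))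
    calc _ ≤ _ := norm_sub_le _ _
      _ ≤ 2 ^ j * C + 2 ^ j * C := add_le_add h1 h2
      _ = 2 ^ (j + 1) * C := by ring

lemma cellVal_translate {ψ : Set V → ℂ}
    (hψ : ∀ (S : Set V) (v : V), ψ ((fun y => y - v) ⁻¹' S) = ψ S)
    {j : ℕ} (f : Fin j → V →L[ℝ] ℝ) (z : Fin j → ℤ) (v : V) (hv : ∀ i, f i v = z i) (K : Set V) :
    cellVal ψ f z ((fun y => y - v) ⁻¹' K) = cellVal ψ f 0 K := by
  induction j generalizing K with
  | zero => exact hψ K v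
  | succ j ih =>
    have e1 : (fun y => y - v) ⁻¹' K ∩ slab (f 0) (z 0) =
        (fun y => y - v) ⁻¹' (K ∩ slab (f 0) 0) := by
      ext y
      simp only [slab, Set.mem_inter_iff, Set.mem_preimage, Set.mem_ofPred_eq, map_sub, hv]
      refine and_congr_right fun _ => ?_
      constructor <;> rintro ⟨h1, h2⟩ <;> push_cast at * <;> constructor <;> linarith
    have e2 : (fun y => y - v) ⁻¹' K ∩ wall (f 0) (z 0) =
        (fun y => y - v) ⁻¹' (K ∩ wall (f 0) 0) := by
      ext y
      simp [wall, hv, sub_eq_zero]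
    have hv' : ∀ i, Fin.tail f i v = (Fin.tail z i : ℝ) := fun i => hv i.succ
    rw [cellVal, cellVal, e1, e2, ih _ _ hv', ih _ _ hv']
    rfl

/-- Telescoping over the slabs of a single functional. -/
lemma extVal_eq_sum_slab {φ : ConvexBody V → ℂ} (hφ : IsValuation φ) (f : V →L[ℝ] ℝ)
    {K : Set V} (hK : Convex ℝ K) (hK' : IsCompact K) {M : ℤ}
    (hM : ∀ y ∈ K, -(M : ℝ) < f y ∧ f y < M) :
    extVal φ K = ∑ k ∈ Finset.Ico (-M) M,
      (extVal φ (K ∩ slab f k) - extVal φ (K ∩ wall f k)) := by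
  rcases K.eq_empty_or_nonempty with rfl | ⟨y₀, hy₀⟩
  · simp [extVal_empty]
  have hle (t : ℤ) : Convex ℝ {y | f y ≤ t} ∧ IsClosed {y | f y ≤ t} :=
    ⟨convex_halfSpace_le f.isLinear _, isClosed_le f.continuous continuous_const⟩
  have step (k : ℤ) : extVal φ (K ∩ {y | f y ≤ (k + 1 : ℤ)}) = extVal φ (K ∩ {y | f y ≤ k}) +
      (extVal φ (K ∩ slab f k) - extVal φ (K ∩ wall f k)) := by
    have e1 : K ∩ {y | f y ≤ (k + 1 : ℤ)} = (K ∩ {y | f y ≤ k}) ∪ (K ∩ slab f k) := by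
      ext y
      simp only [slab, Set.mem_inter_iff, Set.mem_union, Set.mem_ofPred_eq, Int.cast_add,
        Int.cast_one]
      constructor
      · rintro ⟨h1, h2⟩
        rcases le_total (f y) k with h | h
        · exact Or.inl ⟨h1, h⟩
        · exact Or.inr ⟨h1, h, h2⟩
      · rintro (⟨h1, h2⟩ | ⟨h1, -, h2⟩)
        · exact ⟨h1, by linarith⟩
        · exact ⟨h1, h2⟩
    have e2 : K ∩ wall f k = (K ∩ {y | f y ≤ k}) ∩ (K ∩ slab f k) := by
      ext y
      simp only [slab, wall, Set.mem_inter_iff, Set.mem_ofPred_eq]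
      constructor
      · rintro ⟨h1, h2⟩
        exact ⟨⟨h1, h2.le⟩, h1, h2.ge, by linarith⟩
      · rintro ⟨⟨h1, h2⟩, -, h3, -⟩
        exact ⟨h1, le_antisymm h2 h3⟩
    rw [e2, e1, extVal_union hφ (hK.inter (hle k).1) (hK'.inter_right (hle k).2)
      (hK.inter (convex_slab f k)) (hK'.inter_right (isClosed_slab f k))
      (e1 ▸ hK.inter (hle (k + 1)).1)]
    ring
  have tele (b : ℤ) (hb : -M ≤ b) : extVal φ (K ∩ {y | f y ≤ b}) =
      extVal φ (K ∩ {y | f y ≤ (-M : ℤ)}) + ∑ k ∈ Finset.Ico (-M) b,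
        (extVal φ (K ∩ slab f k) - extVal φ (K ∩ wall f k)) := by
    induction b, hb using Int.leInduction with
    | base => simp
    | succ b hb ih =>
      rw [step, ih, ← Finset.insert_Ico_right_eq_Ico_add_one hb, Finset.sum_insert (by simp)]
      ring
  have hM0 : -M ≤ M := by
    have := hM y₀ hy₀
    have h : (-M : ℝ) < M := this.1.trans this.2
    exact_mod_cast h.le
  have eb : K ∩ {y | f y ≤ M} = K := Set.inter_eq_left.2 fun y hy => (hM y hy).2.le
  have ea : K ∩ {y | f y ≤ (-M : ℤ)} = ∅ := by
    rw [Set.eq_empty_iff_forall_notMem]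
    rintro y ⟨h1, h2⟩
    rw [Set.mem_ofPred_eq, Int.cast_neg] at h2
    linarith [(hM y h1).1]
  have := tele M hM0
  rwa [ea, eb, extVal_empty, zero_add] at this

/-- Cutting a body along all hyperplanes of the grid: the half-open cells partition `K`. -/
lemma extVal_eq_sum_cellVal {φ : ConvexBody V → ℂ} (hφ : IsValuation φ) {j : ℕ}
    (f : Fin j → V →L[ℝ] ℝ) {K : Set V} (hK : Convex ℝ K) (hK' : IsCompact K) {M : ℤ}
    (hM : ∀ i, ∀ y ∈ K, -(M : ℝ) < f i y ∧ f i y < M) :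
    extVal φ K = ∑ z ∈ Fintype.piFinset fun _ : Fin j => Finset.Ico (-M) M,
      cellVal (extVal φ) f z K := by
  induction j generalizing K with
  | zero => simp [cellVal]
  | succ j ih =>
    rw [extVal_eq_sum_slab hφ (f 0) hK hK' (hM 0)]
    have e : ∑ z ∈ Fintype.piFinset fun _ : Fin (j + 1) => Finset.Ico (-M) M,
        cellVal (extVal φ) f z K = ∑ p ∈ Finset.Ico (-M) M ×ˢ
          (Fintype.piFinset fun _ : Fin j => Finset.Ico (-M) M),
        cellVal (extVal φ) f (Fin.cons p.1 p.2) K := by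
      symm
      refine Finset.sum_equiv (Fin.consEquiv fun _ => ℤ) (fun p => ?_) (fun p _ => rfl)
      simp [Fin.forall_fin_succ, Fin.consEquiv]
    rw [e, Finset.sum_product]
    refine Finset.sum_congr rfl fun k _ => ?_
    simp only [cellVal, Fin.cons_zero, Fin.tail_cons, Finset.sum_sub_distrib]
    rw [← ih (Fin.tail f) (hK.inter (convex_slab _ _)) (hK'.inter_right (isClosed_slab _ _))
        (fun i y hy => hM i.succ y hy.1),
      ← ih (Fin.tail f) (hK.inter (convex_wall _ _)) (hK'.inter_right (isClosed_wall _ _))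
        (fun i y hy => hM i.succ y hy.1)]

end Cells

/-! ### Riemann sums over the scaled grid -/

section Grid

variable {V : Type*} [NormedAddCommGroup V] [NormedSpace ℝ V] [FiniteDimensional ℝ V]

/-- The coordinate functionals of a basis, as continuous linear maps. -/
noncomputable def coordCLM {n : ℕ} (b : Module.Basis (Fin n) ℝ V) (i : Fin n) : V →L[ℝ] ℝ :=
  (b.coord i).toContinuousLinearMap

lemma coordCLM_apply {n : ℕ} (b : Module.Basis (Fin n) ℝ V) (i : Fin n) (x : V) :
    coordCLM b i x = b.repr x i := rfl

/-- The index of the grid cell (for the basis `b`) containing `t • x`. -/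
noncomputable def gridIdx {n : ℕ} (b : Module.Basis (Fin n) ℝ V) (t : ℝ) (x : V) (i : Fin n) : ℤ :=
  ⌊t * coordCLM b i x⌋

/-- The lattice point with integral coordinates `z`. -/
noncomputable def latticePt {n : ℕ} (b : Module.Basis (Fin n) ℝ V) (z : Fin n → ℤ) : V :=
  ∑ i, (z i : ℝ) • b i

lemma coordCLM_latticePt {n : ℕ} (b : Module.Basis (Fin n) ℝ V) (z : Fin n → ℤ) (i : Fin n) :
    coordCLM b i (latticePt b z) = z i := by
  rw [coordCLM_apply, latticePt, b.repr_sum_self]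

lemma smul_mem_cell_gridIdx {n : ℕ} (b : Module.Basis (Fin n) ℝ V) (t : ℝ) (x : V) :
    t • x ∈ cell (coordCLM b) (gridIdx b t x) := by
  intro i
  rw [map_smul, smul_eq_mul]
  exact ⟨Int.floor_le _, (Int.lt_floor_add_one _).le⟩

lemma norm_sub_le_of_mem_cell {n : ℕ} (b : Module.Basis (Fin n) ℝ V) {z : Fin n → ℤ} {x y : V}
    (hx : x ∈ cell (coordCLM b) z) (hy : y ∈ cell (coordCLM b) z) :
    ‖y - x‖ ≤ ∑ i, ‖b i‖ := by
  rw [← b.sum_repr (y - x)]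
  refine norm_sum_le_of_le _ fun i _ => ?_
  rw [norm_smul]
  refine mul_le_of_le_one_left (norm_nonneg _) ?_
  rw [Real.norm_eq_abs, ← coordCLM_apply, map_sub, abs_le]
  have h1 := hx i
  have h2 := hy i
  constructor <;> linarith

lemma dist_le_of_mem_cell_gridIdx {n : ℕ} (b : Module.Basis (Fin n) ℝ V) {t : ℝ} (ht : 0 < t)
    {x y : V} (hy : t • y ∈ cell (coordCLM b) (gridIdx b t x)) :
    dist x y ≤ t⁻¹ * ∑ i, ‖b i‖ := by
  have h := norm_sub_le_of_mem_cell b (smul_mem_cell_gridIdx b t x) hy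
  rw [← smul_sub, norm_smul, Real.norm_of_nonneg ht.le] at h
  rw [dist_comm, dist_eq_norm, ← div_eq_inv_mul, le_div_iff₀' ht]
  exact h

lemma isCompact_cell {n : ℕ} (b : Module.Basis (Fin n) ℝ V) (z : Fin n → ℤ) :
    IsCompact (cell (coordCLM b) z) := by
  have : ProperSpace V := FiniteDimensional.proper ℝ V
  refine isCompact_of_isClosed_isBounded ?_ ?_
  · have : cell (coordCLM b) z = ⋂ i, slab (coordCLM b i) (z i) := by
      ext y
      simp [cell, slab]
    rw [this]
    exact isClosed_iInter fun i => isClosed_slab _ _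
  · refine Metric.isBounded_iff.2 ⟨∑ i, ‖b i‖, fun x hx y hy => ?_⟩
    rw [dist_eq_norm]
    exact norm_sub_le_of_mem_cell b hy hx

lemma cellVal_eq_zero {φ : ConvexBody V → ℂ} {n : ℕ} (b : Module.Basis (Fin n) ℝ V)
    (z : Fin n → ℤ) {S : Set V} (h : S ∩ cell (coordCLM b) z = ∅) :
    cellVal (extVal φ) (coordCLM b) z S = 0 := by
  rw [cellVal_congr (K' := ∅) _ _ _ (by simpa using h)]
  have := norm_cellVal_le (ψ := extVal φ) (C := 0) (coordCLM b) z convex_empty isCompact_empty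
    (fun L _ _ hL => by
      rw [Set.empty_inter, Set.subset_empty_iff] at hL
      rw [hL, extVal_empty, norm_zero])
  simpa using this

variable [MeasurableSpace V] [BorelSpace V]

lemma measurable_gridIdx {n : ℕ} (b : Module.Basis (Fin n) ℝ V) (t : ℝ) :
    Measurable (gridIdx b t) :=
  measurable_pi_lambda _ fun i =>
    Int.measurable_floor.comp ((coordCLM b i).continuous.measurable.const_mul t)

lemma measureReal_gridIdx_eq {n : ℕ} (b : Module.Basis (Fin n) ℝ V) (μ : Measure V)
    [μ.IsAddHaarMeasure] {t : ℝ} (ht : 0 < t) (z : Fin n → ℤ) :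
    μ.real {x | gridIdx b t x = z} = (t ^ n)⁻¹ * μ.real (ZSpan.fundamentalDomain b) := by
  have e : {x | gridIdx b t x = z} = (fun x => t • x) ⁻¹'
      ((fun x => x + -latticePt b z) ⁻¹' ZSpan.fundamentalDomain b) := by
    ext x
    simp only [Set.mem_ofPred_eq, Set.mem_preimage, ZSpan.mem_fundamentalDomain, funext_iff,
      gridIdx, Int.floor_eq_iff, Set.mem_Ico]
    refine forall_congr' fun i => ?_
    rw [← coordCLM_apply, map_add, map_neg, map_smul, coordCLM_latticePt, smul_eq_mul]
    constructor <;> rintro ⟨h1, h2⟩ <;> constructor <;> linarith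
  rw [e, Measure.real, Measure.addHaar_preimage_smul μ ht.ne', measure_preimage_add_right,
    ENNReal.toReal_mul, ENNReal.toReal_ofReal (abs_nonneg _), abs_of_nonneg (by positivity),
    Module.finrank_eq_card_basis b, Fintype.card_fin]
  rfl

variable {φ : ConvexBody V → ℂ} {n : ℕ} (b : Module.Basis (Fin n) ℝ V)

/-- The cell decomposition of `t • K`, rewritten as the integral of a step function. -/
lemma integral_cellVal (hφ : IsValuation φ) (hh : IsHomogeneousVal φ n) (μ : Measure V)
    [μ.IsAddHaarMeasure] (K : ConvexBody V) {t : ℝ} (ht : 0 < t) :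
    ∫ x, cellVal (extVal φ) (coordCLM b) (gridIdx b t x) (t • (K : Set V)) ∂μ =
      μ.real (ZSpan.fundamentalDomain b) * φ K := by
  have hc : Convex ℝ (t • (K : Set V)) := K.convex.smul t
  have hk : IsCompact (t • (K : Set V)) := K.isCompact.smul t
  have hval : extVal φ (t • (K : Set V)) = (t : ℂ) ^ n * φ K := by
    have := hh ⟨t, ht.le⟩ K
    exact (extVal_coe φ _).trans this
  obtain ⟨M, hM⟩ : ∃ M : ℤ, ∀ i, ∀ y ∈ t • (K : Set V),
      -(M : ℝ) < coordCLM b i y ∧ coordCLM b i y < M := by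
    obtain ⟨C, hC⟩ := hk.exists_bound_of_continuousOn (f := fun y i => coordCLM b i y)
      (by fun_prop)
    obtain ⟨N, hN⟩ := exists_nat_gt C
    refine ⟨N, fun i y hy => abs_lt.1 ?_⟩
    calc |coordCLM b i y| ≤ C := (norm_le_pi_norm (fun i => coordCLM b i y) i).trans (hC y hy)
      _ < _ := by exact_mod_cast hN
  have hstep (x : V) : cellVal (extVal φ) (coordCLM b) (gridIdx b t x) (t • (K : Set V)) =
      ∑ z ∈ Fintype.piFinset fun _ : Fin n => Finset.Ico (-M) M,
        {x | gridIdx b t x = z}.indicator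
          (fun _ => cellVal (extVal φ) (coordCLM b) z (t • (K : Set V))) x := by
    simp only [Set.indicator_apply, Set.mem_ofPred_eq]
    rw [Finset.sum_ite_eq]
    split_ifs with hz
    · rfl
    · refine cellVal_eq_zero b _ (Set.eq_empty_iff_forall_notMem.2 ?_)
      rintro y ⟨hy, hyc⟩
      refine hz (Fintype.mem_piFinset.2 fun i => Finset.mem_Ico.2 ?_)
      have h1 := hM i y hy
      have h2 := hyc i
      constructor
      · have : (-M : ℝ) < (gridIdx b t x i : ℝ) + 1 := by linarith
        have : -M < gridIdx b t x i + 1 := by exact_mod_cast this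
        omega
      · have : (gridIdx b t x i : ℝ) < M := by linarith
        exact_mod_cast this
  have hms (z : Fin n → ℤ) : MeasurableSet {x | gridIdx b t x = z} :=
    measurable_gridIdx b t (measurableSet_singleton z)
  have hfin (z : Fin n → ℤ) : μ {x | gridIdx b t x = z} ≠ ⊤ := by
    have : ProperSpace V := FiniteDimensional.proper ℝ V
    refine measure_ne_top_of_subset (fun x hx => ?_)
      ((isCompact_cell b z).smul t⁻¹).measure_lt_top.ne
    rw [Set.mem_smul_set_iff_inv_smul_mem₀ (inv_ne_zero ht.ne'), inv_inv]
    have := smul_mem_cell_gridIdx b t x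
    rwa [hx] at this
  simp_rw [hstep]
  rw [integral_finsetSum _ fun z _ => (integrable_indicator_iff (hms z)).2
    (integrableOn_const (hfin z))]
  simp_rw [integral_indicator_const _ (hms _), measureReal_gridIdx_eq b μ ht, ← Finset.smul_sum]
  rw [← extVal_eq_sum_cellVal hφ (coordCLM b) hc hk hM, hval, Complex.real_smul]
  push_cast
  have : (t : ℂ) ^ n ≠ 0 := pow_ne_zero _ (by exact_mod_cast ht.ne')
  field_simp

/-- As the grid is refined, the step functions converge off the null set `frontier K` to
`c • 1_K`, where `c` is the value of the half-open unit cell. -/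
lemma tendsto_integral_cellVal (hφ : MemVal φ) (μ : Measure V)
    [μ.IsAddHaarMeasure] (K : ConvexBody V) :
    Tendsto (fun k : ℕ => ∫ x, cellVal (extVal φ) (coordCLM b) (gridIdx b (k + 1) x)
      ((k + 1 : ℝ) • (K : Set V)) ∂μ) atTop
      (𝓝 (μ.real (K : Set V) * cellVal (extVal φ) (coordCLM b) 0 (cell (coordCLM b) 0))) := by
  have : ProperSpace V := FiniteDimensional.proper ℝ V
  set c := cellVal (extVal φ) (coordCLM b) 0 (cell (coordCLM b) 0) with hc
  set R := ∑ i, ‖b i‖ with hR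
  have hR0 : 0 ≤ R := Finset.sum_nonneg fun i _ => norm_nonneg _
  have htrans := extVal_translate hφ.2.1
  have hcell (z : Fin n → ℤ) :
      cell (coordCLM b) z = (fun y => y - latticePt b z) ⁻¹' cell (coordCLM b) 0 := by
    ext y
    simp only [cell, Set.mem_ofPred_eq, Set.mem_preimage, map_sub, coordCLM_latticePt]
    refine forall_congr' fun i => ?_
    constructor <;> rintro ⟨h1, h2⟩ <;> constructor <;> simp at * <;> linarith
  obtain ⟨C, hC0, hC⟩ := exists_bound_of_continuous hφ.2.2 (isCompact_cell b 0)
  have hCz (z : Fin n → ℤ) (L : Set V) (hL : Convex ℝ L) (hL' : IsCompact L)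
      (hs : L ⊆ cell (coordCLM b) z) : ‖extVal φ L‖ ≤ C := by
    rw [← htrans L (-latticePt b z), extVal]
    split_ifs with h
    · refine hC _ fun y hy => ?_
      have h1 : y - -latticePt b z ∈ cell (coordCLM b) z := hs hy
      rw [hcell] at h1
      simpa using h1
    · simpa using hC0
  have hlim : Tendsto (fun k : ℕ => ((k : ℝ) + 1)⁻¹ * R) atTop (𝓝 0) := by
    simpa using (tendsto_one_div_add_atTop_nhds_zero_nat (𝕜 := ℝ)).mul_const R
  have hT : IsCompact (cthickening R (K : Set V)) := K.isCompact.cthickening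
  have hrhs : (μ.real (K : Set V) : ℂ) * c = ∫ x, (K : Set V).indicator (fun _ => c) x ∂μ := by
    rw [integral_indicator_const _ K.isClosed.measurableSet, Complex.real_smul]
  rw [hrhs]
  refine tendsto_integral_of_dominated_convergence
    ((cthickening R (K : Set V)).indicator fun _ => 2 ^ n * C) ?_ ?_ ?_ ?_
  · intro k
    exact ((measurable_of_countable fun z => cellVal (extVal φ) (coordCLM b) z
      ((k + 1 : ℝ) • (K : Set V))).comp (measurable_gridIdx b _)).aestronglyMeasurable
  · rw [integrable_indicator_iff hT.isClosed.measurableSet]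
    exact integrableOn_const hT.measure_lt_top.ne
  · intro k
    have hk : (0 : ℝ) < k + 1 := by positivity
    refine Eventually.of_forall fun x => ?_
    rcases (((k + 1 : ℝ) • (K : Set V)) ∩
      cell (coordCLM b) (gridIdx b (k + 1) x)).eq_empty_or_nonempty with he | ⟨_, ⟨y, hy, rfl⟩, hyc⟩
    · rw [cellVal_eq_zero b _ he, norm_zero]
      exact Set.indicator_nonneg (fun _ _ => by positivity) _
    · have hx : x ∈ cthickening R (K : Set V) := by
        refine mem_cthickening_of_dist_le x y R _ hy
          ((dist_le_of_mem_cell_gridIdx b hk hyc).trans ?_)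
        refine mul_le_of_le_one_left hR0 (inv_le_one_of_one_le₀ ?_)
        linarith [k.cast_nonneg (α := ℝ)]
      rw [Set.indicator_of_mem hx]
      exact norm_cellVal_le _ _ (K.convex.smul _) (K.isCompact.smul _)
        fun L hL hL' hs => hCz _ L hL hL' (hs.trans Set.inter_subset_right)
  · have hfr : ∀ᵐ x ∂μ, x ∉ frontier (K : Set V) :=
      measure_eq_zero_iff_ae_notMem.1 (K.convex.addHaar_frontier μ)
    filter_upwards [hfr] with x hx
    refine tendsto_const_nhds.congr' ?_
    by_cases hxK : x ∈ (K : Set V)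
    · have hxi : x ∈ interior (K : Set V) := by
        by_contra h
        exact hx ⟨subset_closure hxK, h⟩
      obtain ⟨r, hr, hb⟩ := Metric.isOpen_iff.1 isOpen_interior x hxi
      filter_upwards [hlim.eventually (gt_mem_nhds hr)] with k hk
      have hk0 : (0 : ℝ) < k + 1 := by positivity
      -- The cell around `(k + 1) • x` lies inside `(k + 1) • K`, so `K` may be replaced by it.
      have hsub : cell (coordCLM b) (gridIdx b (k + 1) x) ⊆ (k + 1 : ℝ) • (K : Set V) := by
        intro y hy
        rw [Set.mem_smul_set_iff_inv_smul_mem₀ hk0.ne']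
        refine interior_subset (hb ?_)
        rw [mem_ball, dist_comm]
        refine (dist_le_of_mem_cell_gridIdx b hk0 ?_).trans_lt hk
        rwa [smul_inv_smul₀ hk0.ne']
      rw [Set.indicator_of_mem hxK,
        cellVal_congr (K' := cell (coordCLM b) (gridIdx b (k + 1) x)) _ _ _
          (by rw [Set.inter_self, Set.inter_eq_right.2 hsub])]
      conv_rhs => rw [hcell]
      rw [cellVal_translate htrans _ _ _ (coordCLM_latticePt b _)]
    · obtain ⟨r, hr, hb⟩ := Metric.isOpen_iff.1 K.isClosed.isOpen_compl x hxK
      filter_upwards [hlim.eventually (gt_mem_nhds hr)] with k hk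
      have hk0 : (0 : ℝ) < k + 1 := by positivity
      rw [Set.indicator_of_notMem hxK, cellVal_eq_zero b]
      rw [Set.eq_empty_iff_forall_notMem]
      rintro _ ⟨⟨y, hy, rfl⟩, hyc⟩
      refine hb ?_ hy
      rw [mem_ball, dist_comm]
      exact (dist_le_of_mem_cell_gridIdx b hk0 hyc).trans_lt hk

end Grid

/-- `Val_0(V)` is one-dimensional and spanned by the Euler characteristic `χ` (the valuation
constantly equal to `1`), and `Val_n(V)` (`n = dim V`) is one-dimensional and spanned by a
Lebesgue measure `vol`: every translation invariant continuous valuation homogeneous of degree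
`n` is a constant multiple of `vol` (Hadwiger's theorem on top-degree valuations). -/
theorem val_extreme_degrees_one_dimensional {V : Type*} [NormedAddCommGroup V] [NormedSpace ℝ V]
    [FiniteDimensional ℝ V] [MeasurableSpace V] [BorelSpace V]
    (μ : Measure V) [μ.IsAddHaarMeasure] :
    (MemVal (fun _ : ConvexBody V => (1 : ℂ)) ∧
      IsHomogeneousVal (fun _ : ConvexBody V => (1 : ℂ)) 0) ∧
    (MemVal (fun K : ConvexBody V => ((μ (K : Set V)).toReal : ℂ)) ∧
      IsHomogeneousVal (fun K : ConvexBody V => ((μ (K : Set V)).toReal : ℂ))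
        (Module.finrank ℝ V)) ∧
    (∀ φ : ConvexBody V → ℂ, MemVal φ → IsHomogeneousVal φ 0 →
      ∃ c : ℂ, ∀ K : ConvexBody V, φ K = c) ∧
    (∀ φ : ConvexBody V → ℂ, MemVal φ → IsHomogeneousVal φ (Module.finrank ℝ V) →
      ∃ c : ℂ, ∀ K : ConvexBody V, φ K = c * ((μ (K : Set V)).toReal : ℂ)) := by
  refine ⟨⟨⟨fun _ _ _ _ _ _ => by norm_num, fun _ _ => rfl, continuous_const⟩, fun _ _ => by simp⟩,
    ⟨⟨?_, ?_, ConvexBody.continuous_measure μ⟩, ?_⟩, ?_, ?_⟩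
  · intro A B C D hC hD
    have h := measureReal_union_add_inter (μ := μ) (s := (A : Set V)) B.isClosed.measurableSet
      A.isCompact.measure_lt_top.ne B.isCompact.measure_lt_top.ne
    rw [← hC, ← hD] at h
    have h' : μ.real (C : Set V) = μ.real (A : Set V) + μ.real (B : Set V) - μ.real (D : Set V) := by
      linarith
    change (μ.real (C : Set V) : ℂ) = μ.real (A : Set V) + μ.real (B : Set V) - μ.real (D : Set V)
    exact_mod_cast h'
  · intro K x
    simp [ConvexBody.singletonBody, Set.add_singleton]
  · intro c K
    have h : μ ((c • K : ConvexBody V) : Set V) =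
        ENNReal.ofReal |(c : ℝ) ^ Module.finrank ℝ V| * μ (K : Set V) := by
      rw [ConvexBody.coe_smul']
      exact Measure.addHaar_smul μ (c : ℝ) (K : Set V)
    simp only [h, ENNReal.toReal_mul, ENNReal.toReal_ofReal (abs_nonneg _)]
    rw [abs_of_nonneg (by positivity)]
    push_cast
    rfl
  · intro φ _ hh
    -- Every body contracts to the origin: `φ K = 0 ^ 0 * φ K = φ (0 • K) = φ 0`.
    refine ⟨φ 0, fun K => ?_⟩
    have := hh 0 K
    rwa [zero_smul, pow_zero, one_mul, eq_comm] at this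
  · intro φ hφ hh
    let b := Module.finBasis ℝ V
    have hP : (μ.real (ZSpan.fundamentalDomain b) : ℂ) ≠ 0 := by
      have : ProperSpace V := FiniteDimensional.proper ℝ V
      have h0 := ZSpan.measure_fundamentalDomain_ne_zero b (μ := μ)
      have h1 := (ZSpan.fundamentalDomain_isBounded b).measure_lt_top (μ := μ)
      exact_mod_cast (ENNReal.toReal_pos h0 h1.ne).ne'
    refine ⟨cellVal (extVal φ) (coordCLM b) 0 (cell (coordCLM b) 0) /
      μ.real (ZSpan.fundamentalDomain b), fun K => ?_⟩
    -- The integrals do not depend on the mesh, so they equal their limit.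
    have hlim := tendsto_integral_cellVal b hφ μ K
    have hconst (k : ℕ) := integral_cellVal b hφ.1 hh μ K (t := k + 1) (by positivity)
    simp_rw [hconst] at hlim
    have h := tendsto_nhds_unique tendsto_const_nhds hlim
    change φ K = _ * (μ.real (K : Set V) : ℂ)
    rw [div_mul_eq_mul_div, eq_div_iff hP, mul_comm (φ K), h, mul_comm]
end
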